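/- arXiv:1606.09010 — 7 statements merged into one kernel-verified Lean document; each statement's English description precedes it below -/
import Mathlib

section
/- Let n ≥ 1 and let α be a primitive isotropic element of the generalized Kummer lattice Λ_n. If d = Div(α) denotes the divisibility of α, then d² divides n + 1. -/
/-- The Beauville–Bogomolov form of the generalized Kummer lattice
`Λ_n = U^{⊕3} ⊕ ⟨-(2n+2)⟩`, as a bilinear form on `ℤ⁷`. -/
def kummerForm (n : ℕ) (x y : Fin 7 → ℤ) : ℤ :=
  x 0 * y 1 + x 1 * y 0 + x 2 * y 3 + x 3 * y 2 + x 4 * y 5 + x 5 * y 4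
    - (2 * (n : ℤ) + 2) * (x 6 * y 6)

/-- An element of `ℤ^m` is primitive if the gcd of its coordinates is `1`. -/
def IsPrimitive {m : ℕ} (x : Fin m → ℤ) : Prop :=
  Finset.univ.gcd x = 1

/-- `d` is the divisibility `Div(x)` of `x` with respect to the bilinear form `B`,
i.e. the positive generator of the ideal `{B x y : y}` of `ℤ`. -/
def IsDivisibility {m : ℕ} (B : (Fin m → ℤ) → (Fin m → ℤ) → ℤ)
    (x : Fin m → ℤ) (d : ℤ) : Prop :=
  0 < d ∧ (∀ y, d ∣ B x y) ∧ ∀ e : ℤ, (∀ y, e ∣ B x y) → e ∣ d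

/- The coordinates of `α` off `δ` are values of the form, because `U` is unimodular, so `d` divides
them and `d ^ 2` divides half the norm of the `U^{⊕3}`-component. Modulo `d ^ 2`, half the norm of
`α` is therefore `-(n + 1) a ^ 2`, where `a` is the coordinate along `δ`; primitivity makes `a`
coprime to `d`. -/

theorem IsPrimitive.isCoprime_apply_of_dvd {m : ℕ} {x : Fin m → ℤ} (hx : IsPrimitive x)
    {d : ℤ} {i : Fin m} (hd : ∀ j ≠ i, d ∣ x j) : IsCoprime d (x i) := by
  refine IsRelPrime.isCoprime fun e he_d he_i ↦ isUnit_of_dvd_one ?_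
  rw [← show Finset.univ.gcd x = 1 from hx]
  refine Finset.dvd_gcd fun j _ ↦ ?_
  obtain rfl | hj := eq_or_ne j i
  · exact he_i
  · exact he_d.trans (hd j hj)

theorem kummerForm_self (n : ℕ) (x : Fin 7 → ℤ) :
    kummerForm n x x =
      2 * (x 0 * x 1 + x 2 * x 3 + x 4 * x 5 - ((n : ℤ) + 1) * x 6 ^ 2) := by
  unfold kummerForm
  ring

theorem exists_forall_kummerForm_eq_apply (n : ℕ) {i : Fin 7} (hi : i ≠ 6) :
    ∃ y, ∀ x, kummerForm n x y = x i := by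
  -- The entries of `![1, 0, 3, 2, 5, 4, 6]` exchange the two basis vectors of each copy of `U`.
  refine ⟨Pi.single (![1, 0, 3, 2, 5, 4, 6] i) 1, fun x ↦ ?_⟩
  fin_cases i <;> simp [kummerForm] at hi ⊢

theorem dvd_apply_of_forall_dvd_kummerForm {n : ℕ} {x : Fin 7 → ℤ} {d : ℤ}
    (hd : ∀ y, d ∣ kummerForm n x y) {i : Fin 7} (hi : i ≠ 6) : d ∣ x i := by
  obtain ⟨y, hy⟩ := exists_forall_kummerForm_eq_apply n hi
  exact hy x ▸ hd y

theorem stmt0_general {n : ℕ} {α : Fin 7 → ℤ} (hprim : IsPrimitive α) {d : ℤ}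
    (hd : ∀ y, d ∣ kummerForm n α y) :
    2 * d ^ 2 ∣ kummerForm n α α ↔ d ^ 2 ∣ (n : ℤ) + 1 := by
  have hcoord {i : Fin 7} (hi : i ≠ 6) : d ∣ α i := dvd_apply_of_forall_dvd_kummerForm hd hi
  have hcop : IsCoprime (d ^ 2) (α 6 ^ 2) :=
    (hprim.isCoprime_apply_of_dvd fun _ ↦ hcoord).pow
  have hmul {i j : Fin 7} (hi : i ≠ 6) (hj : j ≠ 6) : d ^ 2 ∣ α i * α j :=
    sq d ▸ mul_dvd_mul (hcoord hi) (hcoord hj)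
  have hU : d ^ 2 ∣ α 0 * α 1 + α 2 * α 3 + α 4 * α 5 :=
    ((hmul (by decide) (by decide)).add (hmul (by decide) (by decide))).add
      (hmul (by decide) (by decide))
  rw [kummerForm_self, mul_dvd_mul_iff_left two_ne_zero, dvd_sub_right hU]
  exact ⟨hcop.dvd_of_dvd_mul_right, fun h ↦ h.mul_right _⟩

theorem stmt0 (n : ℕ) (hn : 1 ≤ n) (α : Fin 7 → ℤ)
    (hprim : IsPrimitive α) (hiso : kummerForm n α α = 0)
    (d : ℤ) (hd : IsDivisibility (kummerForm n) α d) :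
    d ^ 2 ∣ (n : ℤ) + 1 := by
  exact (stmt0_general hprim hd.2.1).mp (hiso ▸ dvd_zero _)
end

section
/- Let n ≥ 1 and let α be a primitive isotropic element of the generalized Kummer lattice Λ_n. Write α = α₀ + b·δ with α₀ in the U^{⊕3} summand (the first six coordinates) and b ∈ ℤ. Then α₀ ≠ 0, and if a > 0 denotes the gcd of the coordinates of α₀, so that α₀ = a·ξ with ξ primitive in U^{⊕3}, then gcd(a,b) = 1 and Div(α) = a. -/
/-!
Write `Λ_n = U^{⊕3} ⊕ ℤδ` and `α = a•ξ + b•δ`. A common divisor of `a` and `b` divides `α`, so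
`a` and `b` are coprime, and then `0 = q(α) = a² q(ξ) + b² q(δ)` forces `a² ∣ q(δ)`. Pairing with
`α` is `a` times pairing with `ξ` plus `b` times pairing with `δ`, and the latter takes values in
`q(δ)ℤ`, so `a` divides every value. As `U^{⊕3}` is unimodular, the primitive `ξ` pairs to `1` with
some `w` orthogonal to `δ`, and `w` pairs to `a` with `α`.
-/

open QuadraticMap

section IsPrimitive

variable {m : ℕ} {x y : Fin m → ℤ} {a b : ℤ}

theorem IsPrimitive.exists_dotProduct_eq_one (hx : IsPrimitive x) : ∃ c, x ⬝ᵥ c = 1 := by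
  obtain ⟨c, hc⟩ := Finset.univ.gcd_eq_sum_mul x
  exact ⟨c, hc.symm.trans hx⟩

theorem IsPrimitive.ne_zero (hx : IsPrimitive x) : x ≠ 0 := by
  rintro rfl
  obtain ⟨c, hc⟩ := hx.exists_dotProduct_eq_one
  simp at hc

theorem IsPrimitive.isCoprime_of_smul_add_smul (h : IsPrimitive (a • x + b • y)) :
    IsCoprime a b := by
  obtain ⟨c, hc⟩ := h.exists_dotProduct_eq_one
  refine ⟨x ⬝ᵥ c, y ⬝ᵥ c, ?_⟩
  rw [← hc, add_dotProduct, smul_dotProduct, smul_dotProduct, smul_eq_mul, smul_eq_mul]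
  ring

end IsPrimitive

section OrthogonalDecomposition

variable {R M : Type*} [CommRing R] [AddCommGroup M] [Module R M]
  {Q : QuadraticForm R M} {a b : R} {ξ δ : M}

theorem map_smul_add_smul_of_polar_eq_zero (hξδ : polar Q ξ δ = 0) :
    Q (a • ξ + b • δ) = a ^ 2 * Q ξ + b ^ 2 * Q δ := by
  simp only [QuadraticMap.map_add, QuadraticMap.map_smul, polar_smul_left, polar_smul_right, hξδ,
    smul_eq_mul]
  ring

theorem sq_dvd_map_of_map_smul_add_smul_eq_zero (hξδ : polar Q ξ δ = 0) (hab : IsCoprime a b)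
    (hα : Q (a • ξ + b • δ) = 0) : a ^ 2 ∣ Q δ := by
  rw [map_smul_add_smul_of_polar_eq_zero hξδ] at hα
  have hdvd : a ^ 2 ∣ b ^ 2 * Q δ := ⟨-Q ξ, by linear_combination hα⟩
  exact hab.pow.dvd_of_dvd_mul_left hdvd

theorem polar_smul_add_smul_left (y : M) :
    polar Q (a • ξ + b • δ) y = a * polar Q ξ y + b * polar Q δ y := by
  simp only [polar_add_left, polar_smul_left, smul_eq_mul]

theorem dvd_polar_of_isotropic (hξδ : polar Q ξ δ = 0) (hδ : ∀ y, Q δ ∣ polar Q δ y)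
    (hab : IsCoprime a b) (hα : Q (a • ξ + b • δ) = 0) (y : M) :
    a ∣ polar Q (a • ξ + b • δ) y := by
  have ha : a ∣ Q δ := (dvd_pow_self a two_ne_zero).trans
    (sq_dvd_map_of_map_smul_add_smul_eq_zero hξδ hab hα)
  rw [polar_smul_add_smul_left]
  exact dvd_add (dvd_mul_right a _) ((ha.trans (hδ y)).mul_left b)

end OrthogonalDecomposition

theorem IsDivisibility.of_apply_eq {m : ℕ} {B : (Fin m → ℤ) → (Fin m → ℤ) → ℤ}
    {x w : Fin m → ℤ} {d : ℤ} (hd : 0 < d) (hdvd : ∀ y, d ∣ B x y) (hw : B x w = d) :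
    IsDivisibility B x d :=
  ⟨hd, hdvd, fun _ he => hw ▸ he w⟩

section KummerLattice

variable (n : ℕ)

/-- The quadratic form `q` of the even lattice `Λ_n`, normalised by `(x, x) = 2 q(x)`. -/
def kummerQuadraticForm : QuadraticForm ℤ (Fin 7 → ℤ) :=
  proj 0 1 + proj 2 3 + proj 4 5 - ((n : ℤ) + 1) • proj 6 6

/-- The generator `δ` of the summand `⟨-(2n+2)⟩` of `Λ_n`. -/
def kummerDelta : Fin 7 → ℤ :=
  Pi.single 6 1

theorem polar_kummerQuadraticForm : polar (kummerQuadraticForm n) = kummerForm n := by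
  ext x y
  simp only [polar, kummerQuadraticForm, kummerForm, sub_apply, add_apply, smul_apply, proj_apply,
    Pi.add_apply, smul_eq_mul]
  ring

theorem kummerQuadraticForm_eq_zero_of_isotropic {n : ℕ} {x : Fin 7 → ℤ}
    (hx : kummerForm n x x = 0) : kummerQuadraticForm n x = 0 := by
  rw [← polar_kummerQuadraticForm, polar_self] at hx
  exact (smul_eq_zero.mp hx).resolve_left two_ne_zero

theorem kummerQuadraticForm_kummerDelta :
    kummerQuadraticForm n kummerDelta = -((n : ℤ) + 1) := by
  simp [kummerQuadraticForm, kummerDelta]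

theorem kummerForm_kummerDelta_left (y : Fin 7 → ℤ) :
    kummerForm n kummerDelta y = -((2 * (n : ℤ) + 2) * y 6) := by
  simp [kummerForm, kummerDelta]

theorem IsPrimitive.exists_kummerForm_eq_one {ξ : Fin 7 → ℤ} (hξ : IsPrimitive ξ)
    (hξ6 : ξ 6 = 0) : ∃ w, w 6 = 0 ∧ kummerForm n ξ w = 1 := by
  obtain ⟨c, hc⟩ := hξ.exists_dotProduct_eq_one
  -- The Gram matrix of `U` is its own inverse: `w` is `c` with the coordinates of each `U` swapped.
  refine ⟨![c 1, c 0, c 3, c 2, c 5, c 4, 0], rfl, ?_⟩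
  rw [← hc]
  simp only [kummerForm, dotProduct, Fin.sum_univ_seven, hξ6, Matrix.cons_val]
  ring

variable {n}

theorem ne_zero_of_isotropic_add_kummerDelta {α₀ : Fin 7 → ℤ} {b : ℤ}
    (hprim : IsPrimitive (α₀ + b • kummerDelta))
    (hiso : kummerForm n (α₀ + b • kummerDelta) (α₀ + b • kummerDelta) = 0) : α₀ ≠ 0 := by
  rintro rfl
  rw [zero_add] at hprim hiso
  have hq : b * b * -((n : ℤ) + 1) = 0 := by
    rw [← kummerQuadraticForm_kummerDelta, ← smul_eq_mul (b * b), ← QuadraticMap.map_smul]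
    exact kummerQuadraticForm_eq_zero_of_isotropic hiso
  have hb : b = 0 := mul_self_eq_zero.mp ((mul_eq_zero.mp hq).resolve_right (by lia))
  exact hprim.ne_zero (by rw [hb, zero_smul])

theorem isDivisibility_kummerForm_smul_add_smul {a b : ℤ} {ξ : Fin 7 → ℤ} (ha : 0 < a)
    (hξ : IsPrimitive ξ) (hξ6 : ξ 6 = 0) (hab : IsCoprime a b)
    (hiso : kummerForm n (a • ξ + b • kummerDelta) (a • ξ + b • kummerDelta) = 0) :
    IsDivisibility (kummerForm n) (a • ξ + b • kummerDelta) a := by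
  obtain ⟨w, hw6, hw⟩ := hξ.exists_kummerForm_eq_one n hξ6
  have hq : kummerQuadraticForm n (a • ξ + b • kummerDelta) = 0 :=
    kummerQuadraticForm_eq_zero_of_isotropic hiso
  have hξδ : polar (kummerQuadraticForm n) ξ kummerDelta = 0 := by
    rw [polar_comm, polar_kummerQuadraticForm, kummerForm_kummerDelta_left, hξ6, mul_zero, neg_zero]
  have hδ (y : Fin 7 → ℤ) :
      kummerQuadraticForm n kummerDelta ∣ polar (kummerQuadraticForm n) kummerDelta y := by
    rw [kummerQuadraticForm_kummerDelta, polar_kummerQuadraticForm, kummerForm_kummerDelta_left]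
    exact ⟨2 * y 6, by ring⟩
  have hαw : polar (kummerQuadraticForm n) (a • ξ + b • kummerDelta) w = a := by
    rw [polar_smul_add_smul_left, polar_kummerQuadraticForm, hw, kummerForm_kummerDelta_left, hw6,
      mul_zero, neg_zero, mul_zero, mul_one, add_zero]
  rw [← polar_kummerQuadraticForm]
  exact .of_apply_eq ha (dvd_polar_of_isotropic hξδ hδ hab hq) hαw

end KummerLattice

/-- Writing `α = α₀ + b·δ` with `α₀` in the `U^{⊕3}` summand (first six
coordinates) and `b = α 6`: then `α₀ ≠ 0`, and if `α₀ = a·ξ` with `a > 0` and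
`ξ` primitive in `U^{⊕3}` (so `a` is the gcd of the coordinates of `α₀`), then
`gcd(a, b) = 1` and `Div(α) = a`. -/
theorem stmt1 (n : ℕ) (hn : 1 ≤ n) (α : Fin 7 → ℤ)
    (hprim : IsPrimitive α) (hiso : kummerForm n α α = 0)
    (α₀ : Fin 7 → ℤ) (hα₀ : α₀ = fun i => if i = 6 then 0 else α i) :
    α₀ ≠ 0 ∧
      ∀ (a : ℤ) (ξ : Fin 7 → ℤ), 0 < a → IsPrimitive ξ → ξ 6 = 0 →
        α₀ = a • ξ →
          IsCoprime a (α 6) ∧ IsDivisibility (kummerForm n) α a := by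
  have hα : α = α₀ + α 6 • kummerDelta := by
    ext i
    by_cases hi : i = 6 <;> simp [hα₀, kummerDelta, hi]
  generalize α 6 = b at hα ⊢
  subst hα
  refine ⟨ne_zero_of_isotropic_add_kummerDelta hprim hiso, ?_⟩
  rintro a ξ ha hξ hξ6 rfl
  have hab : IsCoprime a b := hprim.isCoprime_of_smul_add_smul
  exact ⟨hab, isDivisibility_kummerForm_smul_add_smul ha hξ hξ6 hab hiso⟩
end

section
/- Let n ≥ 1 and let ι : Λ_n → Λ̃ be a primitive isometric embedding of the generalized Kummer lattice into the Mukai lattice. Then the orthogonal complement ι(Λ_n)^⊥ = {x ∈ Λ̃ : (x, ι(y)) = 0 for all y ∈ Λ_n} is a free abelian group of rank 1, generated by a primitive element v with (v,v) = 2n + 2. -/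
/-- The Mukai form of the Mukai lattice `Λ̃ = U^{⊕4}`, as a bilinear form on `ℤ⁸`. -/
def mukaiForm (x y : Fin 8 → ℤ) : ℤ :=
  x 0 * y 1 + x 1 * y 0 + x 2 * y 3 + x 3 * y 2 + x 4 * y 5 + x 5 * y 4
    + x 6 * y 7 + x 7 * y 6

/-- `ι : Λ_n → Λ̃` is a primitive isometric embedding: injective, preserving the
bilinear forms, and with saturated image (torsion-free quotient). -/
def IsPrimitiveIsometricEmbedding (n : ℕ)
    (ι : (Fin 7 → ℤ) →ₗ[ℤ] (Fin 8 → ℤ)) : Prop :=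
  Function.Injective ι ∧ (∀ x y, mukaiForm (ι x) (ι y) = kummerForm n x y) ∧
    ∀ (k : ℤ) (x : Fin 8 → ℤ), k ≠ 0 → k • x ∈ LinearMap.range ι →
      x ∈ LinearMap.range ι

/-!
Extend a basis of the primitive sublattice `N` to a basis `c` of the unimodular lattice `L`, and let
`v` be the basis dual to `c` with respect to the form. The dual vectors of the added basis vectors
form a basis of `N^⊥`. Since the Gram matrix of `v` is inverse to the transposed Gram matrix of `c`,
Jacobi's complementary minor identity gives `disc N^⊥ * disc L = disc N`, signs included. Here
`disc L = 1` and `disc N = 2n + 2`, while `N^⊥` has rank one, so its discriminant is the square of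
its generator.
-/

section ComplementaryMinor

open Matrix

theorem det_toBlocks₂₂_mul_det_of_mul_eq_one {R m n : Type*} [CommRing R] [Fintype m] [Fintype n]
    [DecidableEq m] [DecidableEq n] {A D : Matrix (m ⊕ n) (m ⊕ n) R} (h : D * A = 1) :
    D.toBlocks₂₂.det * A.det = A.toBlocks₁₁.det := by
  have hlower : D.toBlocks₂₁ * A.toBlocks₁₁ + D.toBlocks₂₂ * A.toBlocks₂₁ = 0 ∧
      D.toBlocks₂₁ * A.toBlocks₁₂ + D.toBlocks₂₂ * A.toBlocks₂₂ = 1 := by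
    rw [← fromBlocks_toBlocks D, ← fromBlocks_toBlocks A, fromBlocks_multiply, ← fromBlocks_one,
      fromBlocks_inj] at h
    exact h.2.2
  calc D.toBlocks₂₂.det * A.det
      = (fromBlocks 1 0 D.toBlocks₂₁ D.toBlocks₂₂ *
          fromBlocks A.toBlocks₁₁ A.toBlocks₁₂ A.toBlocks₂₁ A.toBlocks₂₂).det := by
        rw [det_mul, det_fromBlocks_zero₁₂, det_one, one_mul, fromBlocks_toBlocks]
    _ = (fromBlocks A.toBlocks₁₁ A.toBlocks₁₂ 0 1).det := by
        simp only [fromBlocks_multiply, hlower, Matrix.one_mul, Matrix.zero_mul, add_zero]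
    _ = A.toBlocks₁₁.det := by rw [det_fromBlocks_zero₂₁, det_one, mul_one]

end ComplementaryMinor

section LeftDual

open Module
open LinearMap (BilinForm)
open LinearMap.BilinForm (toMatrix)

variable {R L ι κ ν : Type*} [CommRing R] [AddCommGroup L] [Module R L] {B : BilinForm R L}

/-- The family `v` is dual to the family `c` with respect to `B`, the vectors of `v` being inserted
in the left argument of the not necessarily symmetric form `B`. -/
def IsLeftDual [DecidableEq ι] (B : BilinForm R L) (v c : ι → L) : Prop :=
  ∀ i j, B (v i) (c j) = if i = j then 1 else 0

theorem exists_basis_isLeftDual [Fintype ι] [DecidableEq ι] (c : Basis ι R L)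
    (h : IsUnit (toMatrix c B).det) : ∃ v : Basis ι R L, IsLeftDual B v c := by
  have hunit : IsUnit (LinearMap.toMatrix c c.dualBasis B).det := by
    have htranspose : LinearMap.toMatrix c c.dualBasis B = (toMatrix c B).transpose := by
      ext i j
      simp [LinearMap.toMatrix_apply]
    rwa [htranspose, Matrix.det_transpose]
  let e : L ≃ₗ[R] Dual R L := LinearEquiv.ofIsUnitDet hunit
  refine ⟨c.dualBasis.map e.symm, fun i j ↦ ?_⟩
  have hrepresents : B (e.symm (c.dualBasis i)) = c.dualBasis i := e.apply_symm_apply _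
  rw [Basis.map_apply, hrepresents, Basis.dualBasis_apply_self]
  simp only [eq_comm]

theorem IsLeftDual.repr_apply [DecidableEq ι] {c : ι → L} {v : Basis ι R L}
    (hv : IsLeftDual B v c) (x : L) (j : ι) : v.repr x j = B x (c j) := by
  have hcoord : v.coord j = B.flip (c j) := v.ext fun i ↦ by
    simp [hv i j, Finsupp.single_apply]
  exact LinearMap.congr_fun hcoord x

theorem IsLeftDual.toMatrix_mul_transpose [Fintype ι] [DecidableEq ι] {c v : Basis ι R L}
    (hv : IsLeftDual B v c) : toMatrix v B * (toMatrix c B).transpose = 1 := by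
  ext i j
  calc (toMatrix v B * (toMatrix c B).transpose) i j
      = B (v i) (∑ k, v.repr (c j) k • v k) := by
        simp [Matrix.mul_apply, hv.repr_apply, mul_comm]
    _ = (1 : Matrix ι ι R) i j := by rw [v.sum_repr, hv i j, Matrix.one_apply]

theorem IsLeftDual.mem_span_range_inr_iff [DecidableEq κ] [DecidableEq ν]
    {c : κ ⊕ ν → L} {v : Basis (κ ⊕ ν) R L} (hv : IsLeftDual B v c) (x : L) :
    x ∈ Submodule.span R (Set.range (v ∘ Sum.inr)) ↔ ∀ i, B x (c (Sum.inl i)) = 0 := by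
  rw [Set.range_comp, v.mem_span_image]
  constructor
  · intro hx i
    rw [← hv.repr_apply]
    by_contra hne
    simpa using hx (Finsupp.mem_support_iff.2 hne)
  · rintro hx (i | j) hmem
    · simp [hv.repr_apply, hx i] at hmem
    · exact ⟨j, rfl⟩

end LeftDual

section PrimitiveSublattice

open Module
open LinearMap (BilinForm range)
open LinearMap.BilinForm (toMatrix)

theorem isTorsionFree_quotient_of_forall_smul_mem {R M : Type*} [CommRing R] [IsDomain R]
    [AddCommGroup M] [Module R M] {N : Submodule R M}
    (hN : ∀ (k : R) (x : M), k ≠ 0 → k • x ∈ N → x ∈ N) : IsTorsionFree R (M ⧸ N) := by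
  refine .of_smul_eq_zero fun k q hkq ↦ ?_
  obtain ⟨x, rfl⟩ := N.mkQ_surjective q
  rw [← map_smul, Submodule.mkQ_apply, Submodule.Quotient.mk_eq_zero] at hkq
  rw [Submodule.mkQ_apply, Submodule.Quotient.mk_eq_zero]
  exact or_iff_not_imp_left.2 fun hk ↦ hN k x hk hkq

theorem exists_basis_inl_eq_of_injective {R M L κ ν μ : Type*} [CommRing R] [IsDomain R]
    [IsPrincipalIdealRing R] [AddCommGroup M] [AddCommGroup L] [Module R M] [Module R L]
    [Fintype κ] [Fintype ν] [Fintype μ] (bM : Basis κ R M) (bL : Basis μ R L) {f : M →ₗ[R] L}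
    (hf : Function.Injective f) [IsTorsionFree R (L ⧸ range f)]
    (hcard : Fintype.card μ = Fintype.card κ + Fintype.card ν) :
    ∃ c : Basis (κ ⊕ ν) R L, ∀ i, c (Sum.inl i) = f (bM i) := by
  have : Module.Finite R L := .of_basis bL
  have hrank : finrank R (L ⧸ range f) = Fintype.card ν := by
    have hsum := (range f).finrank_quotient_add_finrank
    rw [LinearMap.finrank_range_of_inj hf, finrank_eq_card_basis bM,
      finrank_eq_card_basis bL] at hsum
    omega
  let bQ : Basis ν R (L ⧸ range f) :=
    (finBasisOfFinrankEq R _ hrank).reindex (Fintype.equivFin ν).symm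
  exact ⟨(bM.map (LinearEquiv.ofInjective f hf)).sumQuot bQ, fun i ↦ by simp⟩

theorem det_toMatrix_eq_det_toMatrix {L κ μ : Type*} [AddCommGroup L] [Fintype κ] [Fintype μ]
    [DecidableEq κ] [DecidableEq μ] (B : BilinForm ℤ L) (b : Basis μ ℤ L) (c : Basis κ ℤ L) :
    (toMatrix b B).det = (toMatrix c B).det := by
  let e : μ ≃ κ := b.indexEquiv c
  have hreindex : toMatrix (b.reindex e) B = (toMatrix b B).submatrix e.symm e.symm := by
    ext i j
    simp
  have hsq : ((b.reindex e).toMatrix c).det * ((b.reindex e).toMatrix c).det = 1 :=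
    Int.isUnit_mul_self ((b.reindex e).isUnit_det c)
  have hdet := congrArg Matrix.det (B.toMatrix_mul_basis_toMatrix (b.reindex e) c)
  rw [Matrix.det_mul, Matrix.det_mul, Matrix.det_transpose, hreindex,
    Matrix.det_submatrix_equiv_self] at hdet
  linear_combination (-(toMatrix b B).det) * hsq + hdet

theorem stmt2_general {M L κ ν μ : Type*} [AddCommGroup M] [AddCommGroup L]
    [Fintype κ] [Fintype ν] [Fintype μ] [DecidableEq κ] [DecidableEq ν] [DecidableEq μ]
    {BM : BilinForm ℤ M} {BL : BilinForm ℤ L} (bM : Basis κ ℤ M) (bL : Basis μ ℤ L)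
    (hBL : IsUnit (toMatrix bL BL).det) {f : M →ₗ[ℤ] L} (hf : Function.Injective f)
    (hiso : ∀ x y, BL (f x) (f y) = BM x y) [IsTorsionFree ℤ (L ⧸ range f)]
    (hcard : Fintype.card μ = Fintype.card κ + Fintype.card ν) :
    ∃ v : Basis (κ ⊕ ν) ℤ L,
      (∀ x, (∀ y, BL x (f y) = 0) ↔ x ∈ Submodule.span ℤ (Set.range (v ∘ Sum.inr))) ∧
      (toMatrix v BL).toBlocks₂₂.det * (toMatrix bL BL).det = (toMatrix bM BM).det := by
  obtain ⟨c, hc⟩ := exists_basis_inl_eq_of_injective (ν := ν) bM bL hf hcard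
  rw [det_toMatrix_eq_det_toMatrix BL bL c] at hBL ⊢
  obtain ⟨v, hv⟩ := exists_basis_isLeftDual c hBL
  refine ⟨v, fun x ↦ ?_, ?_⟩
  · rw [hv.mem_span_range_inr_iff]
    simp only [hc]
    exact ⟨fun h i ↦ h _, fun h ↦ LinearMap.congr_fun (bM.ext h : BL x ∘ₗ f = 0)⟩
  · have hgram : (toMatrix c BL).toBlocks₁₁ = toMatrix bM BM := by
      ext i j
      simp [Matrix.toBlocks₁₁, hc, hiso]
    rw [← hgram, ← Matrix.det_transpose (Matrix.toBlocks₁₁ _),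
      ← Matrix.det_transpose (toMatrix c BL)]
    exact det_toBlocks₂₂_mul_det_of_mul_eq_one hv.toMatrix_mul_transpose

end PrimitiveSublattice

section Primitive

open Module

theorem isPrimitive_of_dual_apply_eq_one {m : ℕ} {x : Fin m → ℤ} {f : Dual ℤ (Fin m → ℤ)}
    (hf : f x = 1) : IsPrimitive x := by
  have hdvd : Finset.univ.gcd x ∣ f x := by
    rw [f.pi_apply_eq_sum_univ]
    exact Finset.dvd_sum fun i hi ↦ (Finset.gcd_dvd hi).mul_right _
  exact Finset.normalize_gcd.symm.trans (normalize_eq_one.2 (isUnit_of_dvd_one (hf ▸ hdvd)))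

theorem isPrimitive_basis_apply {m : ℕ} {ι : Type*} (b : Basis ι ℤ (Fin m → ℤ)) (i : ι) :
    IsPrimitive (b i) :=
  isPrimitive_of_dual_apply_eq_one (f := b.coord i) (by simp)

end Primitive

section KummerMukai

open Equiv
open LinearMap (BilinForm)
open LinearMap.BilinForm (toMatrix)

/-- The form of the generalized Kummer lattice as a bilinear form. Its Gram matrix is written as a
row permutation of a diagonal matrix, so that the determinant is a sign times a product. -/
def kummerBilinForm (n : ℕ) : BilinForm ℤ (Fin 7 → ℤ) :=
  Matrix.toBilin' ((Matrix.diagonal ![1, 1, 1, 1, 1, 1, -(2 * (n : ℤ) + 2)]).submatrix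
    (swap 0 1 * swap 2 3 * swap 4 5 : Perm (Fin 7)) id)

/-- The form of the Mukai lattice as a bilinear form. Its Gram matrix is written as a row
permutation of the identity matrix, so that the determinant is a sign. -/
def mukaiBilinForm : BilinForm ℤ (Fin 8 → ℤ) :=
  Matrix.toBilin' ((1 : Matrix (Fin 8) (Fin 8) ℤ).submatrix
    (swap 0 1 * swap 2 3 * swap 4 5 * swap 6 7 : Perm (Fin 8)) id)

theorem kummerBilinForm_apply (n : ℕ) (x y : Fin 7 → ℤ) :
    kummerBilinForm n x y = kummerForm n x y := by
  simp only [kummerBilinForm, kummerForm, Matrix.toBilin'_apply, Matrix.submatrix_apply,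
    Matrix.diagonal_apply, Perm.coe_mul, Function.comp_apply, swap_apply_def, id_eq, mul_ite,
    mul_zero, mul_one, ite_mul, zero_mul, Finset.sum_ite_eq, Finset.mem_univ, Fin.sum_univ_seven,
    Fin.isValue, Fin.reduceEq, Matrix.cons_val, Matrix.cons_val_zero, Matrix.cons_val_one,
    one_ne_zero, ↓reduceIte]
  ring

theorem mukaiBilinForm_apply (x y : Fin 8 → ℤ) : mukaiBilinForm x y = mukaiForm x y := by
  simp [mukaiBilinForm, mukaiForm, Matrix.toBilin'_apply, Fin.sum_univ_eight, Matrix.one_apply,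
    swap_apply_def]

theorem det_toMatrix_kummerBilinForm (n : ℕ) :
    (toMatrix (Pi.basisFun ℤ (Fin 7)) (kummerBilinForm n)).det = 2 * (n : ℤ) + 2 := by
  rw [LinearMap.BilinForm.toMatrix_basisFun, kummerBilinForm, BilinForm.toMatrix'_toBilin',
    Matrix.det_permute, Matrix.det_diagonal]
  simp [Fin.prod_univ_seven]

theorem det_toMatrix_mukaiBilinForm :
    (toMatrix (Pi.basisFun ℤ (Fin 8)) mukaiBilinForm).det = 1 := by
  rw [LinearMap.BilinForm.toMatrix_basisFun, mukaiBilinForm, BilinForm.toMatrix'_toBilin',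
    Matrix.det_permute]
  simp

end KummerMukai

/-- The orthogonal complement of the image of a primitive isometric embedding
`Λ_n ↪ Λ̃` is free of rank one, generated by a primitive `v` with `(v,v) = 2n+2`. -/
theorem stmt2 (n : ℕ) (hn : 1 ≤ n) (ι : (Fin 7 → ℤ) →ₗ[ℤ] (Fin 8 → ℤ))
    (hι : IsPrimitiveIsometricEmbedding n ι) :
    ∃ v : Fin 8 → ℤ, IsPrimitive v ∧ mukaiForm v v = 2 * (n : ℤ) + 2 ∧
      ∀ x : Fin 8 → ℤ, (∀ y, mukaiForm x (ι y) = 0) ↔ ∃ k : ℤ, x = k • v := by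
  obtain ⟨hinj, hiso, hsat⟩ := hι
  have := isTorsionFree_quotient_of_forall_smul_mem hsat
  simp only [← mukaiBilinForm_apply, ← kummerBilinForm_apply] at hiso ⊢
  obtain ⟨v, hperp, hdet⟩ := stmt2_general (ν := Unit) (Pi.basisFun ℤ (Fin 7))
    (Pi.basisFun ℤ (Fin 8)) (by simp [det_toMatrix_mukaiBilinForm]) hinj hiso (by simp)
  rw [det_toMatrix_mukaiBilinForm, det_toMatrix_kummerBilinForm, mul_one, Matrix.det_unique] at hdet
  refine ⟨v (Sum.inr ()), isPrimitive_basis_apply v _, ?_, fun x ↦ ?_⟩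
  · simpa [Matrix.toBlocks₂₂] using hdet
  · rw [hperp, Set.range_unique, Submodule.mem_span_singleton]
    simp only [Function.comp_apply, PUnit.default_eq_unit, eq_comm]
end

section
/- Let n ≥ 1, let ι : Λ_n → Λ̃ be a primitive isometric embedding of the generalized Kummer lattice into the Mukai lattice, let v be a generator of the rank-1 orthogonal complement ι(Λ_n)^⊥, and let α ∈ Λ_n be primitive isotropic with d = Div(α). Then the lattice H(α,ι), the saturation of the subgroup of Λ̃ generated by ι(α) and v equipped with the restriction of the Mukai form, is isometric to L_{n,d}; moreover there is such an isometry H(α,ι) → L_{n,d} sending v to (d,b) for some integer b with gcd(d,b) = 1. -/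
/-- The saturation of the subgroup of `ℤ^m` generated by a set `s`:
all `x` with `k • x` in the span of `s` for some nonzero integer `k`. -/
def satSpan {m : ℕ} (s : Set (Fin m → ℤ)) : Submodule ℤ (Fin m → ℤ) where
  carrier := {x | ∃ k : ℤ, k ≠ 0 ∧ k • x ∈ Submodule.span ℤ s}
  add_mem' := by
    rintro x y ⟨k, hk, hkx⟩ ⟨l, hl, hly⟩
    refine ⟨k * l, mul_ne_zero hk hl, ?_⟩
    have h : (k * l) • (x + y) = l • (k • x) + k • (l • y) := by
      rw [smul_add, mul_comm k l, mul_smul, mul_comm l k, mul_smul]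
    rw [h]
    exact Submodule.add_mem _ (Submodule.smul_mem _ _ hkx)
      (Submodule.smul_mem _ _ hly)
  zero_mem' := ⟨1, one_ne_zero, by simp⟩
  smul_mem' := by
    rintro c x ⟨k, hk, hkx⟩
    exact ⟨k, hk, by rw [smul_comm]; exact Submodule.smul_mem _ c hkx⟩

section Indivisible

variable {R L M : Type*} [CommRing R] [AddCommGroup L] [AddCommGroup M] [Module R L] [Module R M]

/-- Primitivity of a vector of an arbitrary `R`-module, where `IsPrimitive` has no coordinates to
refer to: only units of `R` divide `x`. -/
def IsIndivisible (R : Type*) {M : Type*} [CommRing R] [AddCommGroup M] [Module R M] (x : M) :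
    Prop :=
  ∀ (k : R) (y : M), x = k • y → IsUnit k

theorem IsPrimitive.isIndivisible {m : ℕ} {x : Fin m → ℤ} (hx : IsPrimitive x) :
    IsIndivisible ℤ x := by
  rintro k y rfl
  have hk : k ∣ Finset.univ.gcd (k • y) := Finset.dvd_gcd fun i _ => Dvd.intro (y i) rfl
  rw [show Finset.univ.gcd (k • y) = 1 from hx] at hk
  exact isUnit_of_dvd_one hk

theorem IsIndivisible.map {ι : L →ₗ[R] M} (hinj : Function.Injective ι)
    (hsat : ∀ (k : R) (x : M), k ≠ 0 → k • x ∈ LinearMap.range ι → x ∈ LinearMap.range ι)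
    {x : L} (hx : IsIndivisible R x) : IsIndivisible R (ι x) := by
  intro k u hu
  rcases eq_or_ne k 0 with rfl | hk
  · exact hx 0 0 (hinj (by simpa using hu))
  · obtain ⟨y, rfl⟩ := hsat k u hk ⟨x, hu⟩
    exact hx k y (hinj (by rw [hu, map_smul]))

theorem IsIndivisible.isCoprime [IsBezout R] {x h v : M} {e m : R} (hx : IsIndivisible R x)
    (hxv : x = e • h + m • v) : IsCoprime e m := by
  refine IsRelPrime.isCoprime ?_
  rintro g ⟨a, rfl⟩ ⟨b, rfl⟩
  exact hx g (a • h + b • v) (by rw [hxv]; module)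

end Indivisible

section Functional

variable {R M : Type*} [CommRing R] [AddCommGroup M] [Module R M]

theorem exists_eq_smul_of_forall_dvd [IsDomain R] {φ : M →ₗ[R] R} {e : R} (h : ∀ y, e ∣ φ y) :
    ∃ ψ : M →ₗ[R] R, φ = e • ψ := by
  rcases eq_or_ne e 0 with rfl | he
  · exact ⟨0, LinearMap.ext fun y => by simpa using h y⟩
  · choose ψ hψ using h
    refine ⟨⟨⟨ψ, fun x y => mul_left_cancel₀ he ?_⟩, fun c x => mul_left_cancel₀ he ?_⟩,
      LinearMap.ext hψ⟩
    · rw [mul_add, ← hψ, ← hψ, ← hψ, map_add]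
    · rw [← hψ, map_smul, hψ, smul_eq_mul, smul_eq_mul, RingHom.id_apply, mul_left_comm]

theorem exists_forall_apply_dvd [IsPrincipalIdealRing R] (φ : M →ₗ[R] R) :
    ∃ z, ∀ y, φ z ∣ φ y := by
  obtain ⟨z, hz⟩ := Submodule.IsPrincipal.generator_mem (LinearMap.range φ)
  refine ⟨z, fun y => ?_⟩
  rw [hz]
  exact (Submodule.IsPrincipal.mem_iff_generator_dvd _).1 (LinearMap.mem_range_self φ y)

theorem IsDivisibility.exists_eq {m : ℕ} {Q : (Fin m → ℤ) → (Fin m → ℤ) → ℤ} {x : Fin m → ℤ}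
    {d : ℤ} (hd : IsDivisibility Q x d) (φ : (Fin m → ℤ) →ₗ[ℤ] ℤ) (hφ : ∀ y, φ y = Q x y) :
    ∃ y, Q x y = d := by
  obtain ⟨z, hz⟩ := exists_forall_apply_dvd φ
  obtain ⟨c, rfl⟩ := hd.2.2 (φ z) fun y => hφ y ▸ hz y
  exact ⟨c • z, by rw [← hφ, map_smul, smul_eq_mul, mul_comm]⟩

end Functional

section Unimodular

variable {R M : Type*} [CommRing R] [IsDomain R] [AddCommGroup M] [Module R M]
  {B : LinearMap.BilinForm R M} [LinearMap.IsPerfPair B]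

theorem exists_eq_smul_of_forall_dvd_pairing {x : M} {e : R} (h : ∀ y, e ∣ B x y) :
    ∃ z, x = e • z := by
  obtain ⟨ψ, hψ⟩ := exists_eq_smul_of_forall_dvd h
  obtain ⟨z, rfl⟩ := (LinearMap.IsPerfPair.bijective_left B).surjective ψ
  exact ⟨z, (LinearMap.IsPerfPair.bijective_left B).injective (by rw [hψ, map_smul])⟩

theorem IsIndivisible.exists_apply_eq_one [IsPrincipalIdealRing R] {x : M}
    (hx : IsIndivisible R x) : ∃ y, B x y = 1 := by
  obtain ⟨z, hz⟩ := exists_forall_apply_dvd (B x)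
  obtain ⟨u, hu⟩ := exists_eq_smul_of_forall_dvd_pairing hz
  obtain ⟨c, hc⟩ := (hx _ u hu).exists_left_inv
  exact ⟨c • z, by rw [map_smul, smul_eq_mul, hc]⟩

theorem exists_eq_smul_add_smul {x v f : M} {e : R} (hvf : B v f = 1)
    (hx : ∀ y, B v y = 0 → e ∣ B x y) : ∃ h, x = e • h + B x f • v := by
  have hdvd : ∀ y, e ∣ B (x - B x f • v) y := by
    intro y
    have hy : B v (y - B v y • f) = 0 := by simp [hvf]
    convert hx _ hy using 1
    simp [mul_comm]
  obtain ⟨h, hh⟩ := exists_eq_smul_of_forall_dvd_pairing hdvd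
  exact ⟨h, sub_eq_iff_eq_add.1 hh⟩

end Unimodular

section Norm

variable {R M : Type*} [CommRing R] [AddCommGroup M] [Module R M] {B : LinearMap.BilinForm R M}
  {x h v : M} {e m : R}

theorem dvd_self_of_isCoprime (hx : x = e • h + m • v) (hvx : B v x = 0) (hem : IsCoprime e m) :
    e ∣ B v v := by
  have hsum : e * B v h + m * B v v = 0 := by simpa [hx] using hvx
  exact hem.dvd_of_dvd_mul_left ⟨-B v h, by linear_combination hsum⟩

theorem sq_mul_self_eq (hB : B.IsSymm) (hx : x = e • h + m • v) (hvx : B v x = 0) :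
    e ^ 2 * B h h = B x x + m ^ 2 * B v v := by
  have hxv : B x v = 0 := by rw [hB.eq, hvx]
  calc e ^ 2 * B h h
    _ = B (e • h) (e • h) := by
      simp only [map_smul, LinearMap.smul_apply, smul_eq_mul]
      ring
    _ = B (x - m • v) (x - m • v) := by rw [hx, add_sub_cancel_right]
    _ = B x x + m ^ 2 * B v v := by
      simp only [map_sub, map_smul, LinearMap.sub_apply, LinearMap.smul_apply, smul_eq_mul, hvx,
        hxv]
      ring

theorem sq_mul_apply_eq_of_isotropic {a y : M} {d p q r s : R} (hB : B.IsSymm) (hva : B v a = 0)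
    (haa : B a a = 0) (hx : d • x = p • v + r • a) (hy : d • y = q • v + s • a) :
    d ^ 2 * B x y = p * q * B v v := by
  have hav : B a v = 0 := by rw [hB.eq, hva]
  calc d ^ 2 * B x y
    _ = B (d • x) (d • y) := by
      simp only [map_smul, LinearMap.smul_apply, smul_eq_mul]
      ring
    _ = p * q * B v v := by
      rw [hx, hy]
      simp only [map_add, map_smul, LinearMap.add_apply, LinearMap.smul_apply, smul_eq_mul, hva,
        hav, haa]
      ring

end Norm

section EvenNorm

variable {M : Type*} [AddCommGroup M] {B : LinearMap.BilinForm ℤ M} {x h v : M} {e m : ℤ}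

theorem sq_dvd_of_isotropic (hB : B.IsSymm) (heven : ∀ y, Even (B y y))
    (hx : x = e • h + m • v) (hvx : B v x = 0) (hxx : B x x = 0) (hem : IsCoprime e m) {k : ℤ}
    (hk : B v v = 2 * k) : e ^ 2 ∣ k := by
  obtain ⟨j, hj⟩ := heven h
  have hnorm := sq_mul_self_eq hB hx hvx
  rw [hxx, hk, hj] at hnorm
  have hdvd : e ^ 2 ∣ m ^ 2 * k := ⟨j, by linarith⟩
  exact hem.pow.dvd_of_dvd_mul_left hdvd

theorem not_four_dvd_sq_add_one (m : ℤ) : ¬ 4 ∣ m ^ 2 + 1 := by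
  have hsq : ∀ x : ZMod 4, x ^ 2 + 1 ≠ 0 := by decide
  intro hm
  exact hsq m (by exact_mod_cast (ZMod.intCast_zmod_eq_zero_iff_dvd _ 4).2 hm)

theorem self_eq_of_self_eq_neg (hB : B.IsSymm) (heven : ∀ y, Even (B y y))
    (hx : x = e • h + m • v) (hvx : B v x = 0) (hxx : B x x = -e) (he : Even e) (he0 : e ≠ 0)
    (hem : IsCoprime e m) (hve : B v v ∣ e) : B v v = e := by
  have hassoc := Int.associated_iff.1 (associated_of_dvd_dvd hve (dvd_self_of_isCoprime hx hvx hem))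
  refine hassoc.resolve_right fun hneg => ?_
  obtain ⟨i, hi⟩ := he
  obtain ⟨j, hj⟩ := heven h
  have hm : e * (m ^ 2 + 1) = e * (-e * B h h) := by
    linear_combination sq_mul_self_eq hB hx hvx + hxx + m ^ 2 * hneg
  refine not_four_dvd_sq_add_one m ⟨-i * j, ?_⟩
  rw [mul_left_cancel₀ he0 hm, hi, hj]
  ring

end EvenNorm

section OrthogonalGenerator

variable {R L M : Type*} [CommRing R] [AddCommGroup L] [AddCommGroup M] [Module R L]
  [Module R M] {B : LinearMap.BilinForm R M} {ι : L →ₗ[R] M} {v : M}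

/-- The vector `v` generates the orthogonal complement of the image of `ι`, elementwise as in the
hypothesis on the generator `v` of `ι(Λ_n)^⊥`. -/
def IsOrthogonalGenerator (B : LinearMap.BilinForm R M) (ι : L →ₗ[R] M) (v : M) : Prop :=
  ∀ x, (∀ y, B x (ι y) = 0) ↔ ∃ k : R, x = k • v

namespace IsOrthogonalGenerator

theorem apply_map (hv : IsOrthogonalGenerator B ι v) (y : L) : B v (ι y) = 0 :=
  (hv v).2 ⟨1, (one_smul R v).symm⟩ y

theorem isIndivisible [IsDomain R] [Module.IsTorsionFree R M]
    (hv : IsOrthogonalGenerator B ι v) (hv0 : v ≠ 0) : IsIndivisible R v := by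
  intro j u hju
  have hj : j ≠ 0 := by
    rintro rfl
    exact hv0 (by rw [hju, zero_smul])
  have hu : ∀ y, B u (ι y) = 0 := fun y => by
    have hvy := hv.apply_map y
    rw [hju, map_smul, LinearMap.smul_apply, smul_eq_mul] at hvy
    exact (mul_eq_zero.1 hvy).resolve_left hj
  obtain ⟨l, rfl⟩ := (hv u).1 hu
  have hjl : (1 : R) • v = (j * l) • v := by rw [one_smul, mul_smul, ← hju]
  exact IsUnit.of_mul_eq_one l (smul_left_injective R hv0 hjl).symm

theorem exists_smul_eq_map_add_smul {N : R} (hv : IsOrthogonalGenerator B ι v)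
    (hN : ∀ φ : L →ₗ[R] R, ∃ p, ∀ y, B (ι p) (ι y) = N * φ y) (x : M) :
    ∃ (p : L) (c : R), N • x = ι p + c • v := by
  obtain ⟨p, hp⟩ := hN (B x ∘ₗ ι)
  obtain ⟨c, hc⟩ := (hv (N • x - ι p)).1 fun y => by simp [hp]
  exact ⟨p, c, sub_eq_iff_eq_add'.1 hc⟩

end IsOrthogonalGenerator

theorem generator_ne_zero {N : R} (hsat : ∀ x, N • x ∈ LinearMap.range ι → x ∈ LinearMap.range ι)
    (hsurj : ¬ Function.Surjective ι)
    (hdecomp : ∀ x, ∃ (p : L) (c : R), N • x = ι p + c • v) : v ≠ 0 := by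
  rintro rfl
  refine hsurj fun x => ?_
  obtain ⟨p, c, hpc⟩ := hdecomp x
  exact hsat x ⟨p, by simpa using hpc.symm⟩

theorem self_dvd_of_exists_smul_eq {N : R} {f : M} (hvι : ∀ y, B v (ι y) = 0) (hvf : B v f = 1)
    (hdecomp : ∀ x, ∃ (p : L) (c : R), N • x = ι p + c • v) : B v v ∣ N := by
  obtain ⟨p, c, hpc⟩ := hdecomp f
  have hN : N = c * B v v := by simpa [hvι, hvf] using congrArg (B v) hpc
  exact Dvd.intro_left c hN.symm

theorem mem_range_of_orthogonal [IsDomain R] {N : R} (hvv : B v v ≠ 0)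
    (hsat : ∀ x, N • x ∈ LinearMap.range ι → x ∈ LinearMap.range ι)
    (hvι : ∀ y, B v (ι y) = 0)
    (hdecomp : ∀ x, ∃ (p : L) (c : R), N • x = ι p + c • v) {x : M} (hvx : B v x = 0) :
    x ∈ LinearMap.range ι := by
  obtain ⟨p, c, hpc⟩ := hdecomp x
  have hc : c * B v v = 0 := by simpa [hvι, hvx] using (congrArg (B v) hpc).symm
  obtain rfl := (mul_eq_zero.1 hc).resolve_right hvv
  exact hsat x ⟨p, by simpa using hpc.symm⟩

end OrthogonalGenerator

theorem exists_dual_pair {R M : Type*} [CommRing R] [IsDomain R] [AddCommGroup M] [Module R M]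
    {a h v : M} {d k : R} (hd : d ≠ 0) (hdk : IsCoprime d k) (ha : a = d • h + k • v)
    {φ ψ : M →ₗ[R] R} (hφa : φ a = d) (hφv : φ v = 0) (hψa : ψ a = k) (hψv : ψ v = 1) :
    ∃ (b : R) (g : M) (F : M →ₗ[R] (Fin 2 → R)), IsCoprime d b ∧ d • g = v - b • a ∧
      F g = Pi.single 0 1 ∧ F a = Pi.single 1 1 := by
  obtain ⟨t, b, htb⟩ := hdk
  have hdg : d • (t • v - b • h) = v - b • a := by
    calc d • (t • v - b • h) = (t * d + b * k) • v - b • (d • h + k • v) := by module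
      _ = v - b • a := by rw [htb, one_smul, ha]
  have hφh : φ h = 1 := mul_left_cancel₀ hd <| by simpa [hφa, hφv] using (congrArg φ ha).symm
  have hψh : ψ h = 0 := mul_left_cancel₀ hd <| by simpa [hψa, hψv] using (congrArg ψ ha).symm
  refine ⟨b, t • v - b • h, LinearMap.pi ![d • ψ - k • φ, t • φ + b • ψ],
    ⟨t, k, by linear_combination htb⟩, hdg, ?_, ?_⟩
  · ext i
    fin_cases i
    · simpa [hφh, hφv, hψh, hψv, mul_comm] using htb
    · simp [hφh, hφv, hψh, hψv, mul_comm]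
  · ext i
    fin_cases i
    · simp [hφa, hψa, mul_comm]
    · simpa [hφa, hψa] using htb

section SatSpan

variable {m : ℕ} {s : Set (Fin m → ℤ)}

theorem subset_satSpan : s ⊆ satSpan s := fun x hx =>
  ⟨1, one_ne_zero, by rw [one_smul]; exact Submodule.subset_span hx⟩

theorem eqOn_satSpan {N : Type*} [AddCommGroup N] [Module.IsTorsionFree ℤ N]
    {f g : (Fin m → ℤ) →ₗ[ℤ] N} (h : Set.EqOn f g s) : Set.EqOn f g (satSpan s) := by
  rintro x ⟨k, hk, hkx⟩
  have hfg := LinearMap.eqOn_span h hkx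
  rw [map_smul, map_smul] at hfg
  exact smul_right_injective N hk hfg

section Dual

variable {κ : Type*} [Fintype κ] [DecidableEq κ] {b : κ → Fin m → ℤ}
  {F : (Fin m → ℤ) →ₗ[ℤ] (κ → ℤ)}

theorem comp_linearCombination_of_dual (hF : ∀ i, F (b i) = Pi.single i 1) :
    F ∘ₗ Fintype.linearCombination ℤ b = LinearMap.id :=
  LinearMap.pi_ext' fun i => LinearMap.ext_ring (by simp [hF])

theorem linearCombination_apply_of_mem_satSpan (hF : ∀ i, F (b i) = Pi.single i 1)
    (hs : s ⊆ Submodule.span ℤ (Set.range b)) {x : Fin m → ℤ} (hx : x ∈ satSpan s) :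
    Fintype.linearCombination ℤ b (F x) = x := by
  have hs_eq : Set.EqOn (Fintype.linearCombination ℤ b ∘ₗ F)
      (LinearMap.id : (Fin m → ℤ) →ₗ[ℤ] (Fin m → ℤ)) s := by
    intro y hy
    refine LinearMap.eqOn_span (s := Set.range b) ?_ (hs hy)
    rintro _ ⟨i, rfl⟩
    simp [hF]
  exact eqOn_satSpan hs_eq hx

/-- Coordinates on the saturation of the span of `s` with respect to a spanning family `b`. The
family `F` dual to `b` forces the span of `b` to be saturated and `b` to be a basis of it. -/
def satSpan.equivOfDual (hF : ∀ i, F (b i) = Pi.single i 1) (hb : ∀ i, b i ∈ satSpan s)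
    (hs : s ⊆ Submodule.span ℤ (Set.range b)) : satSpan s ≃ₗ[ℤ] (κ → ℤ) :=
  LinearEquiv.ofLinearMap (F ∘ₗ (satSpan s).subtype)
    ((Fintype.linearCombination ℤ b).codRestrict _ fun u =>
      Submodule.sum_mem _ fun i _ => Submodule.smul_mem _ (u i) (hb i))
    (comp_linearCombination_of_dual hF)
    (LinearMap.ext fun x => Subtype.ext (linearCombination_apply_of_mem_satSpan hF hs x.2))

end Dual

theorem exists_satSpan_pair_equiv {a g v : Fin m → ℤ} {d b : ℤ} (hd : d ≠ 0)
    (hdg : d • g = v - b • a) {F : (Fin m → ℤ) →ₗ[ℤ] (Fin 2 → ℤ)} (hFg : F g = Pi.single 0 1)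
    (hFa : F a = Pi.single 1 1) :
    ∃ (hv : v ∈ satSpan {a, v}) (e : satSpan {a, v} ≃ₗ[ℤ] (Fin 2 → ℤ)),
      e ⟨v, hv⟩ = ![d, b] ∧ ∀ x, ∃ r : ℤ, d • x.1 = e x 0 • v + r • a := by
  have hv : v = d • g + b • a := by rw [hdg, sub_add_cancel]
  have hF : ∀ i, F (![g, a] i) = Pi.single i 1 := Fin.forall_fin_two.2 ⟨hFg, hFa⟩
  have hg : g ∈ satSpan {a, v} :=
    ⟨d, hd, Submodule.mem_span_pair.2 ⟨-b, 1, by rw [hdg]; module⟩⟩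
  have hga : ∀ i, ![g, a] i ∈ satSpan {a, v} :=
    Fin.forall_fin_two.2 ⟨hg, subset_satSpan (Set.mem_insert a {v})⟩
  have hspan : {a, v} ⊆ (Submodule.span ℤ (Set.range ![g, a]) : Set (Fin m → ℤ)) := by
    rw [Matrix.range_cons_cons_empty]
    rintro x (rfl | rfl)
    · exact Submodule.subset_span (by simp)
    · exact Submodule.mem_span_pair.2 ⟨d, b, hv.symm⟩
  refine ⟨subset_satSpan (by simp), satSpan.equivOfDual hF hga hspan, ?_,
    fun x => ⟨d * F x 1 - b * F x 0, ?_⟩⟩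
  · calc F v = d • F g + b • F a := by rw [← map_smul, ← map_smul, ← map_add, ← hv]
      _ = ![d, b] := by rw [hFg, hFa]; ext i; fin_cases i <;> simp
  · have hx : F x 0 • g + F x 1 • a = x := by
      simpa [Fintype.linearCombination_apply, -zsmul_eq_mul] using
        linearCombination_apply_of_mem_satSpan hF hspan x.2
    calc d • x.1 = d • (F x 0 • g + F x 1 • a) := by rw [hx]
      _ = F x 0 • (d • g) + (d * F x 1) • a := by module
      _ = F x 0 • v + (d * F x 1 - b * F x 0) • a := by rw [hdg]; module

end SatSpan

section Mukai

/-- `mukaiForm` as an element of the module of bilinear forms. -/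
def mukaiBilin : LinearMap.BilinForm ℤ (Fin 8 → ℤ) :=
  LinearMap.mk₂ ℤ mukaiForm
    (fun x y z => by simp only [mukaiForm, Pi.add_apply]; ring)
    (fun c x y => by simp only [mukaiForm, Pi.smul_apply, smul_eq_mul]; ring)
    (fun x y z => by simp only [mukaiForm, Pi.add_apply]; ring)
    (fun c x y => by simp only [mukaiForm, Pi.smul_apply, smul_eq_mul]; ring)

theorem mukaiBilin_apply (x y : Fin 8 → ℤ) : mukaiBilin x y = mukaiForm x y := rfl

theorem isSymm_mukaiBilin : mukaiBilin.IsSymm :=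
  ⟨fun x y => by simp only [mukaiBilin_apply, mukaiForm]; ring⟩

theorem even_mukaiBilin_self (x : Fin 8 → ℤ) : Even (mukaiBilin x x) :=
  ⟨x 0 * x 1 + x 2 * x 3 + x 4 * x 5 + x 6 * x 7, by
    simp only [mukaiBilin_apply, mukaiForm]; ring⟩

instance : LinearMap.IsPerfPair mukaiBilin := by
  refine .of_bijective _ ⟨(injective_iff_map_eq_zero _).2 fun x hx => ?_, fun φ => ?_⟩
  · have hx_single (i : Fin 8) : mukaiForm x (Pi.single i 1) = 0 := DFunLike.congr_fun hx _
    ext i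
    fin_cases i
    exacts [by simpa [mukaiForm] using hx_single 1, by simpa [mukaiForm] using hx_single 0,
      by simpa [mukaiForm] using hx_single 3, by simpa [mukaiForm] using hx_single 2,
      by simpa [mukaiForm] using hx_single 5, by simpa [mukaiForm] using hx_single 4,
      by simpa [mukaiForm] using hx_single 7, by simpa [mukaiForm] using hx_single 6]
  · refine ⟨![φ (Pi.single 1 1), φ (Pi.single 0 1), φ (Pi.single 3 1), φ (Pi.single 2 1),
      φ (Pi.single 5 1), φ (Pi.single 4 1), φ (Pi.single 7 1), φ (Pi.single 6 1)], ?_⟩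
    refine LinearMap.pi_ext' fun i => LinearMap.ext_ring ?_
    fin_cases i <;> simp [mukaiBilin_apply, mukaiForm]

end Mukai

section Kummer

theorem kummerForm_single_six (n : ℕ) (y : Fin 7 → ℤ) :
    kummerForm n (Pi.single 6 1) y = -(2 * (n : ℤ) + 2) * y 6 := by
  simp only [kummerForm, ne_eq, Fin.reduceEq, not_false_eq_true, Pi.single_eq_of_ne,
    Pi.single_eq_same]
  ring

theorem exists_kummerForm_eq_mul (n : ℕ) (φ : (Fin 7 → ℤ) →ₗ[ℤ] ℤ) :
    ∃ p, ∀ y, kummerForm n p y = (2 * (n : ℤ) + 2) * φ y := by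
  let c (i : Fin 7) : ℤ := φ (Pi.single i 1)
  refine ⟨![(2 * n + 2) * c 1, (2 * n + 2) * c 0, (2 * n + 2) * c 3, (2 * n + 2) * c 2,
    (2 * n + 2) * c 5, (2 * n + 2) * c 4, -c 6], fun y => ?_⟩
  have hφ : φ y = ∑ i, y i * c i := by
    conv_lhs => rw [pi_eq_sum_univ' y]
    simp [c, -zsmul_eq_mul]
  rw [hφ, Fin.sum_univ_seven]
  simp only [kummerForm, Matrix.cons_val_zero, Matrix.cons_val_one, Matrix.cons_val]
  ring

theorem isIndivisible_single {m : ℕ} (i : Fin m) :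
    IsIndivisible ℤ (Pi.single i 1 : Fin m → ℤ) :=
  fun k y hky => IsUnit.of_mul_eq_one (y i) (by simpa using (congrFun hky i).symm)

end Kummer

section Embedding

variable {n : ℕ} {ι : (Fin 7 → ℤ) →ₗ[ℤ] (Fin 8 → ℤ)} {v : Fin 8 → ℤ}

namespace IsPrimitiveIsometricEmbedding

theorem exists_smul_eq_map_add_smul_generator (hι : IsPrimitiveIsometricEmbedding n ι)
    (hv : IsOrthogonalGenerator mukaiBilin ι v) (x : Fin 8 → ℤ) :
    ∃ (p : Fin 7 → ℤ) (c : ℤ), (2 * (n : ℤ) + 2) • x = ι p + c • v := by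
  refine hv.exists_smul_eq_map_add_smul (fun φ => ?_) x
  obtain ⟨p, hp⟩ := exists_kummerForm_eq_mul n φ
  exact ⟨p, fun y => (hι.2.1 p y).trans (hp y)⟩

theorem mem_range_of_smul_mem_range (hι : IsPrimitiveIsometricEmbedding n ι) (x : Fin 8 → ℤ)
    (hx : (2 * (n : ℤ) + 2) • x ∈ LinearMap.range ι) : x ∈ LinearMap.range ι :=
  hι.2.2 _ x (by positivity) hx

theorem map_isIndivisible (hι : IsPrimitiveIsometricEmbedding n ι) {x : Fin 7 → ℤ}
    (hx : IsIndivisible ℤ x) : IsIndivisible ℤ (ι x) :=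
  hx.map hι.1 hι.2.2

theorem isIndivisible_generator (hι : IsPrimitiveIsometricEmbedding n ι)
    (hv : IsOrthogonalGenerator mukaiBilin ι v) : IsIndivisible ℤ v := by
  have hsurj : ¬ Function.Surjective ι := fun h => by
    simpa using LinearMap.finrank_le_finrank_of_surjective h
  exact hv.isIndivisible (generator_ne_zero hι.mem_range_of_smul_mem_range hsurj
    (hι.exists_smul_eq_map_add_smul_generator hv))

theorem generator_self_dvd (hι : IsPrimitiveIsometricEmbedding n ι)
    (hv : IsOrthogonalGenerator mukaiBilin ι v) : mukaiBilin v v ∣ 2 * (n : ℤ) + 2 := by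
  obtain ⟨f, hvf⟩ := (hι.isIndivisible_generator hv).exists_apply_eq_one (B := mukaiBilin)
  exact self_dvd_of_exists_smul_eq hv.apply_map hvf (hι.exists_smul_eq_map_add_smul_generator hv)

theorem mem_range_of_generator_orthogonal (hι : IsPrimitiveIsometricEmbedding n ι)
    (hv : IsOrthogonalGenerator mukaiBilin ι v) {x : Fin 8 → ℤ} (hvx : mukaiBilin v x = 0) :
    x ∈ LinearMap.range ι :=
  mem_range_of_orthogonal (ne_zero_of_dvd_ne_zero (by positivity) (hι.generator_self_dvd hv))
    hι.mem_range_of_smul_mem_range hv.apply_map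
    (hι.exists_smul_eq_map_add_smul_generator hv) hvx

theorem exists_map_eq_smul_add_smul (hι : IsPrimitiveIsometricEmbedding n ι)
    (hv : IsOrthogonalGenerator mukaiBilin ι v) {f : Fin 8 → ℤ} (hvf : mukaiBilin v f = 1)
    {x : Fin 7 → ℤ} {e : ℤ} (hx : ∀ y, e ∣ kummerForm n x y) :
    ∃ h, ι x = e • h + mukaiBilin (ι x) f • v := by
  refine exists_eq_smul_add_smul hvf fun z hz => ?_
  obtain ⟨y, rfl⟩ := hι.mem_range_of_generator_orthogonal hv hz
  exact (hx y).trans (hι.2.1 x y).symm.dvd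

theorem generator_self (hι : IsPrimitiveIsometricEmbedding n ι)
    (hv : IsOrthogonalGenerator mukaiBilin ι v) : mukaiBilin v v = 2 * (n : ℤ) + 2 := by
  obtain ⟨f, hvf⟩ := (hι.isIndivisible_generator hv).exists_apply_eq_one (B := mukaiBilin)
  have hdvd (y) : 2 * (n : ℤ) + 2 ∣ kummerForm n (Pi.single 6 1) y :=
    ⟨-y 6, by rw [kummerForm_single_six]; ring⟩
  obtain ⟨h, hδ⟩ := hι.exists_map_eq_smul_add_smul hv hvf hdvd
  have hδδ : mukaiBilin (ι (Pi.single 6 1)) (ι (Pi.single 6 1)) = -(2 * (n : ℤ) + 2) :=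
    (hι.2.1 _ _).trans (by simp [kummerForm_single_six])
  exact self_eq_of_self_eq_neg isSymm_mukaiBilin even_mukaiBilin_self hδ
    (hv.apply_map _) hδδ ⟨n + 1, by ring⟩ (by positivity)
    ((hι.map_isIndivisible (isIndivisible_single 6)).isCoprime hδ) (hι.generator_self_dvd hv)

end IsPrimitiveIsometricEmbedding

end Embedding

/-- The lattice `H(α,ι)` (saturation of `⟨ι(α), v⟩` with the restricted Mukai form)
is isometric to `L_{n,d}` (with Gram matrix `((2n+2)/d²)·[[1,0],[0,0]]`) by an
isometry sending `v` to `(d,b)` with `gcd(d,b) = 1`. -/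
theorem stmt3 (n : ℕ) (hn : 1 ≤ n) (ι : (Fin 7 → ℤ) →ₗ[ℤ] (Fin 8 → ℤ))
    (hι : IsPrimitiveIsometricEmbedding n ι) (v : Fin 8 → ℤ)
    (hv : ∀ x : Fin 8 → ℤ, (∀ y, mukaiForm x (ι y) = 0) ↔ ∃ k : ℤ, x = k • v)
    (α : Fin 7 → ℤ) (hprim : IsPrimitive α) (hiso : kummerForm n α α = 0)
    (d : ℤ) (hd : IsDivisibility (kummerForm n) α d) :
    d ^ 2 ∣ (n : ℤ) + 1 ∧
      ∃ (c b : ℤ), c * d ^ 2 = 2 * ((n : ℤ) + 1) ∧ IsCoprime d b ∧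
        ∃ (hvH : v ∈ satSpan {ι α, v})
          (e : satSpan {ι α, v} ≃ₗ[ℤ] (Fin 2 → ℤ)),
          (∀ x y : satSpan {ι α, v}, c * (e x 0 * e y 0) = mukaiForm x.1 y.1) ∧
          e ⟨v, hvH⟩ = ![d, b] := by
  have hv : IsOrthogonalGenerator mukaiBilin ι v := hv
  obtain ⟨f, hvf⟩ := (hι.isIndivisible_generator hv).exists_apply_eq_one (B := mukaiBilin)
  have hvv : mukaiBilin v v = 2 * ((n : ℤ) + 1) := by rw [hι.generator_self hv]; ring
  have hαα : mukaiBilin (ι α) (ι α) = 0 := (hι.2.1 α α).trans hiso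
  obtain ⟨ξ, hξ⟩ := hd.exists_eq (mukaiBilin (ι α) ∘ₗ ι) (hι.2.1 α)
  obtain ⟨h, hαh⟩ := hι.exists_map_eq_smul_add_smul hv hvf hd.2.1
  have hcop := (hι.map_isIndivisible hprim.isIndivisible).isCoprime hαh
  obtain ⟨c, hc⟩ : d ^ 2 ∣ (n : ℤ) + 1 :=
    sq_dvd_of_isotropic isSymm_mukaiBilin even_mukaiBilin_self hαh (hv.apply_map α) hαα hcop hvv
  obtain ⟨b, g, F, hdb, hdg, hFg, hFa⟩ := exists_dual_pair hd.1.ne' hcop hαh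
    (φ := mukaiBilin.flip (ι ξ)) (ψ := mukaiBilin.flip f) ((hι.2.1 α ξ).trans hξ)
    (hv.apply_map ξ) rfl hvf
  obtain ⟨hvH, e, hev, he⟩ := exists_satSpan_pair_equiv hd.1.ne' hdg hFg hFa
  refine ⟨⟨c, hc⟩, 2 * c, b, by linear_combination -2 * hc, hdb, hvH, e, fun x y => ?_, hev⟩
  obtain ⟨r, hx⟩ := he x
  obtain ⟨s, hy⟩ := he y
  have hform := sq_mul_apply_eq_of_isotropic isSymm_mukaiBilin (hv.apply_map α) hαα hx hy
  refine mul_left_cancel₀ (pow_ne_zero 2 hd.1.ne') ?_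
  rw [← mukaiBilin_apply, hform, hvv]
  linear_combination -2 * (e x 0 * e y 0) * hc
end

section
/- Let n ≥ 1 and let α be a primitive isotropic element of the generalized Kummer lattice Λ_n. Then there exists u ∈ Λ_n with (u,α) = 0 and (u,u) = 2, and there exists u' ∈ Λ_n with (u',α) = 0 and (u',u') = −2. -/
/-!
The lattice `U ⊕ U` is the lattice of integral `2 × 2` matrices with quadratic form `2 det`, and
pairing with a fixed vector becomes `P ↦ tr (P A)` for some matrix `A`. A value of the bilinear form
`(x, y) ↦ xᵀ A y` that is minimal for divisibility divides all its values; after dividing `A` by it,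
the minimising `x` and `y` are unimodular, so they extend to elements of `SL₂`. Multiplying by these
on both sides, we may assume that `A₀₀` divides `A₀₁` and `A₁₀`. Then `P = !![z, 1; -e, 0]` has
determinant `e` for every `z`, and `tr (P A) = z A₀₀ + A₁₀ - e A₀₁` vanishes for a suitable `z`.
-/

open Matrix
open scoped MatrixGroups

section BilinearMap

variable {R M N : Type*} [CommRing R] [AddCommGroup M] [Module R M] [AddCommGroup N] [Module R N]

theorem dvd_apply_of_forall_apply_dvd [IsBezout R] (f : M →ₗ[R] R) {x : M}
    (hx : ∀ z, f z ∣ f x → f x ∣ f z) (x' : M) : f x ∣ f x' := by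
  obtain ⟨a, b, hab⟩ := IsBezout.gcd_eq_sum (f x) (f x')
  have hz : f (a • x + b • x') = IsBezout.gcd (f x) (f x') := by
    simpa only [map_add, map_smul, smul_eq_mul] using hab
  calc f x ∣ f (a • x + b • x') := hx _ (hz ▸ IsBezout.gcd_dvd_left _ _)
    _ = IsBezout.gcd (f x) (f x') := hz
    _ ∣ f x' := IsBezout.gcd_dvd_right _ _

theorem exists_forall_apply_dvd_apply [IsPrincipalIdealRing R] (B : M →ₗ[R] N →ₗ[R] R) :
    ∃ x y, ∀ x' y', B x y ∣ B x' y' := by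
  obtain ⟨⟨x, y⟩, -, hmax⟩ := exists_maximalFor_of_wellFoundedGT (fun _ ↦ True)
    (fun p : M × N ↦ Ideal.span {B p.1 p.2}) ⟨0, trivial⟩
  simp only [true_imp_iff, Prod.forall, Ideal.span_singleton_le_span_singleton] at hmax
  have hrow {x₁} (h : B x₁ y = B x y) (y') : B x y ∣ B x₁ y' :=
    h ▸ dvd_apply_of_forall_apply_dvd (B x₁) (fun z hz ↦ h ▸ hmax _ _ (h ▸ hz)) y'
  refine ⟨x, y, fun x' y' ↦ ?_⟩
  obtain ⟨c, hc⟩ : B x y ∣ B x' y :=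
    dvd_apply_of_forall_apply_dvd (B.flip y) (fun _ ↦ hmax _ _) x'
  -- Correcting `x'` by a multiple of `x` makes it orthogonal to `y`, so adding it to `x` keeps
  -- the minimal value `B x y`.
  have hsum : B (x + (x' - c • x)) y = B x y := by
    simp [hc, mul_comm]
  have hdecomp : B x' y' = B (x + (x' - c • x)) y' - B x y' + c * B x y' := by
    simp
  rw [hdecomp]
  exact ((hrow hsum y').sub (hrow rfl y')).add ((hrow rfl y').mul_left c)

end BilinearMap

section TwoByTwo

theorem isCoprime_of_dotProduct_eq_one {R : Type*} [CommSemiring R] {x y : Fin 2 → R}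
    (h : x ⬝ᵥ y = 1) : IsCoprime (x 0) (x 1) :=
  ⟨y 0, y 1, by simpa [dotProduct, Fin.sum_univ_two, mul_comm] using h⟩

variable {R : Type*} [CommRing R]

theorem exists_trace_mul_eq_zero_and_det_eq_of_dvd {A : Matrix (Fin 2) (Fin 2) R}
    (h01 : A 0 0 ∣ A 0 1) (h10 : A 0 0 ∣ A 1 0) (e : R) :
    ∃ P : Matrix (Fin 2) (Fin 2) R, (P * A).trace = 0 ∧ P.det = e := by
  obtain ⟨z, hz⟩ : A 0 0 ∣ e * A 0 1 - A 1 0 := (h01.mul_left e).sub h10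
  refine ⟨!![z, 1; -e, 0], ?_, by simp [det_fin_two]⟩
  simp only [trace_fin_two, mul_apply, Fin.sum_univ_two, of_apply, cons_val', cons_val_zero,
    cons_val_one, cons_val_fin_one]
  linear_combination -hz

variable [IsDomain R] [IsPrincipalIdealRing R]

theorem exists_SL2_mul_mul_zero_zero_dvd (A : Matrix (Fin 2) (Fin 2) R) :
    ∃ S T : SL(2, R), ∀ i j, (S.1 * A * T.1) 0 0 ∣ (S.1 * A * T.1) i j := by
  obtain rfl | hA := eq_or_ne A 0
  · exact ⟨1, 1, by simp⟩
  obtain ⟨x, y, hxy⟩ := exists_forall_apply_dvd_apply (toBilin' A)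
  simp only [toBilin'_apply'] at hxy
  obtain ⟨A', hA'⟩ : ∃ A', A = (x ⬝ᵥ A *ᵥ y) • A' := by
    have hdvd (i j) : x ⬝ᵥ A *ᵥ y ∣ A i j := by
      simpa using hxy (Pi.single i 1) (Pi.single j 1)
    choose A' hA' using hdvd
    exact ⟨of A', Matrix.ext hA'⟩
  have hne : x ⬝ᵥ A *ᵥ y ≠ 0 := fun h ↦ hA (by rw [hA', h, zero_smul])
  have hone : x ⬝ᵥ A' *ᵥ y = 1 := by
    refine mul_left_cancel₀ hne ?_
    rw [mul_one, ← smul_eq_mul, ← dotProduct_smul, ← smul_mulVec, ← hA']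
  have hone' : y ⬝ᵥ x ᵥ* A' = 1 := by rw [dotProduct_comm, ← dotProduct_mulVec, hone]
  obtain ⟨S, hS⟩ := (isCoprime_of_dotProduct_eq_one hone).exists_SL2_row 0
  obtain ⟨T, hT⟩ := (isCoprime_of_dotProduct_eq_one hone').exists_SL2_col 0
  have hSx : S.1.row 0 = x := funext (Fin.forall_fin_two.2 hS)
  have hTy : T.1.col 0 = y := funext (Fin.forall_fin_two.2 hT)
  have hentry (i j) : (S.1 * A * T.1) i j = S.1.row i ⬝ᵥ A *ᵥ T.1.col j := by
    rw [Matrix.mul_assoc]; rfl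
  refine ⟨S, T, fun i j ↦ ?_⟩
  rw [hentry, hentry, hSx, hTy]
  exact hxy _ _

theorem exists_trace_mul_eq_zero_and_det_eq (A : Matrix (Fin 2) (Fin 2) R) (e : R) :
    ∃ P : Matrix (Fin 2) (Fin 2) R, (P * A).trace = 0 ∧ P.det = e := by
  obtain ⟨S, T, hdvd⟩ := exists_SL2_mul_mul_zero_zero_dvd A
  obtain ⟨P, htrace, hdet⟩ := exists_trace_mul_eq_zero_and_det_eq_of_dvd (hdvd 0 1) (hdvd 1 0) e
  refine ⟨T.1 * P * S.1, ?_, by simp [hdet]⟩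
  rw [← htrace, Matrix.mul_assoc, Matrix.mul_assoc, trace_mul_comm]
  simp only [Matrix.mul_assoc]

end TwoByTwo

theorem stmt7_general (n : ℕ) (α : Fin 7 → ℤ) (e : ℤ) :
    ∃ u : Fin 7 → ℤ, kummerForm n u α = 0 ∧ kummerForm n u u = 2 * e := by
  obtain ⟨P, htrace, hdet⟩ := exists_trace_mul_eq_zero_and_det_eq !![α 1, -α 2; α 3, α 0] e
  simp only [trace_fin_two, mul_apply, Fin.sum_univ_two, of_apply, cons_val', cons_val_zero,
    cons_val_one, cons_val_fin_one] at htrace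
  rw [det_fin_two] at hdet
  refine ⟨![P 0 0, P 1 1, P 0 1, -P 1 0, 0, 0, 0], ?_, ?_⟩
  · simp only [kummerForm, cons_val]
    linear_combination htrace
  · simp only [kummerForm, cons_val]
    linear_combination 2 * hdet

/-- For every primitive isotropic `α` in the generalized Kummer lattice there are
`u, u'` orthogonal to `α` with `(u,u) = 2` and `(u',u') = -2`. -/
theorem stmt7 (n : ℕ) (hn : 1 ≤ n) (α : Fin 7 → ℤ)
    (hprim : IsPrimitive α) (hiso : kummerForm n α α = 0) :
    (∃ u : Fin 7 → ℤ, kummerForm n u α = 0 ∧ kummerForm n u u = 2) ∧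
      (∃ u' : Fin 7 → ℤ, kummerForm n u' α = 0 ∧ kummerForm n u' u' = -2) :=
  ⟨by simpa using stmt7_general n α 1, by simpa using stmt7_general n α (-1)⟩
end

section
/- Let n ≥ 1 and d > 0 with d² dividing n + 1, and let j₁, j₂ : L_{n,d} → Λ̃ be two primitive isometric embeddings of the degenerate lattice L_{n,d} into the Mukai lattice. Then there exists an isometry g of Λ̃ (a ℤ-linear automorphism of ℤ⁸ preserving the Mukai form) such that j₂ = g ∘ j₁. -/
/-!
Eichler's criterion, relative to a subset `S` of `K`: over a principal ideal domain, two vectors of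
`U ⊕ U ⊕ K` with the same norm and the same pairings with `S`, each of which pairs to `1` with some
vector orthogonal to `S`, differ by an isometry fixing `S`. Indeed, move either vector by such
isometries to a `v` one of whose coordinates in `U ⊕ U`, say `b`, is minimal for divisibility. The
action of `SL₂` on `U ⊕ U` shows that `b` divides the coordinates of `v` in the second plane, so a
transvection clears them. A transvection attached to the second plane and a vector `w` orthogonal
to `S` then creates there the pairing of `w` with `v`, which `b` therefore divides. Hence `b` is a
unit, and a vector with `b = 1` is determined, up to transvections, by its norm and its pairings
with `S`.

Now represent the form `q` on `L` in `Dual L ⊕ L`, and hence in `K`, by the graph of a bilinear form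
`B` with `B(x, x) = q(x)`. A primitive embedding into a unimodular `U ⊕ U ⊕ K` is carried onto this
standard one a basis vector at a time, `S` being the set of vectors already placed. The next
coordinate form of `L` extends to the whole lattice by primitivity, and by unimodularity it is the
pairing with a vector; this vector is orthogonal to `S` and pairs to `1` with the next one.
-/

open QuadraticMap

section HyperbolicPlane

variable {R K : Type*} [CommRing R] [AddCommGroup K] [Module R K]

variable (R) in
/-- The hyperbolic plane `U`: the module `R × R` with quadratic form `(a, b) ↦ a * b`. -/
def hyperbolicPlane : QuadraticForm R (R × R) :=
  linMulLin (LinearMap.fst R R R) (LinearMap.snd R R R)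

@[simp]
lemma hyperbolicPlane_apply (x : R × R) : hyperbolicPlane R x = x.1 * x.2 := rfl

/-- The orthogonal sum `U ⊕ K` of the hyperbolic plane and the quadratic module `(K, Q)`. -/
def addHyperbolic (Q : QuadraticForm R K) : QuadraticForm R ((R × R) × K) :=
  (hyperbolicPlane R).prod Q

@[simp]
lemma addHyperbolic_apply (Q : QuadraticForm R K) (x : (R × R) × K) :
    addHyperbolic Q x = x.1.1 * x.1.2 + Q x.2 := rfl

@[simp]
lemma polar_addHyperbolic (Q : QuadraticForm R K) (x y : (R × R) × K) :
    polar (addHyperbolic Q) x y = x.1.1 * y.1.2 + x.1.2 * y.1.1 + polar Q x.2 y.2 := by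
  simp only [polar, addHyperbolic_apply, Prod.fst_add, Prod.snd_add]
  ring

/-- The Eichler transvection of `U ⊕ K` attached to the isotropic vector `(1, 0)` of `U` and a
vector `k` of `K`. -/
def eichlerTransvection (Q : QuadraticForm R K) (k : K) :
    (addHyperbolic Q).IsometryEquiv (addHyperbolic Q) where
  toFun x := ((x.1.1 - polar Q k x.2 - Q k * x.1.2, x.1.2), x.2 + x.1.2 • k)
  invFun x := ((x.1.1 + polar Q k x.2 - Q k * x.1.2, x.1.2), x.2 - x.1.2 • k)
  map_add' x y := by
    ext
    · simp only [Prod.fst_add, Prod.snd_add, polar_add_right]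
      ring
    · rfl
    · simp only [Prod.fst_add, Prod.snd_add]
      module
  map_smul' c x := by
    ext
    · simp only [Prod.smul_fst, Prod.smul_snd, polar_smul_right, smul_eq_mul, RingHom.id_apply]
      ring
    · rfl
    · simp only [Prod.smul_fst, Prod.smul_snd, smul_eq_mul, RingHom.id_apply]
      module
  left_inv x := by
    ext
    · simp only [polar_add_right, polar_smul_right, polar_self, smul_eq_mul]
      ring
    · rfl
    · simp only [add_sub_cancel_right]
  right_inv x := by
    ext
    · simp only [polar_sub_right, polar_smul_right, polar_self, smul_eq_mul]
      ring
    · rfl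
    · simp only [sub_add_cancel]
  map_app' x := by
    simp only [addHyperbolic_apply]
    rw [QuadraticMap.map_add Q, QuadraticMap.map_smul, polar_smul_right, polar_comm Q x.2 k,
      smul_eq_mul, smul_eq_mul]
    ring

@[simp]
lemma eichlerTransvection_apply (Q : QuadraticForm R K) (k : K) (x : (R × R) × K) :
    eichlerTransvection Q k x =
      ((x.1.1 - polar Q k x.2 - Q k * x.1.2, x.1.2), x.2 + x.1.2 • k) := rfl

/-- The isometry of `U ⊕ K` exchanging the two isotropic basis vectors of `U`. -/
def hyperbolicFlip (Q : QuadraticForm R K) :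
    (addHyperbolic Q).IsometryEquiv (addHyperbolic Q) where
  __ := (LinearEquiv.prodComm R R R).prodCongr (LinearEquiv.refl R K)
  map_app' x := congrArg (· + Q x.2) (mul_comm x.1.2 x.1.1)

/-- The isometry of `U ⊕ (U ⊕ K)` given by the action of a matrix `!![p, q; r, s]` of determinant
one on the Lagrangian spanned by the second basis vectors of the two planes, and by the
contragredient action on the Lagrangian spanned by the first ones. -/
def specialLinearIsometry (Q : QuadraticForm R K) (p q r s : R) (hdet : p * s - q * r = 1) :
    (addHyperbolic (addHyperbolic Q)).IsometryEquiv (addHyperbolic (addHyperbolic Q)) where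
  toFun x := ((s * x.1.1 - r * x.2.1.1, p * x.1.2 + q * x.2.1.2),
    (p * x.2.1.1 - q * x.1.1, r * x.1.2 + s * x.2.1.2), x.2.2)
  invFun x := ((p * x.1.1 + r * x.2.1.1, s * x.1.2 - q * x.2.1.2),
    (q * x.1.1 + s * x.2.1.1, p * x.2.1.2 - r * x.1.2), x.2.2)
  map_add' x y := by
    ext
    on_goal 5 => rfl
    all_goals simp only [Prod.fst_add, Prod.snd_add]; ring
  map_smul' c x := by
    ext
    on_goal 5 => rfl
    all_goals simp only [Prod.smul_fst, Prod.smul_snd, smul_eq_mul, RingHom.id_apply]; ring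
  left_inv x := by
    ext
    · linear_combination x.1.1 * hdet
    · linear_combination x.1.2 * hdet
    · linear_combination x.2.1.1 * hdet
    · linear_combination x.2.1.2 * hdet
    · rfl
  right_inv x := by
    ext
    · linear_combination x.1.1 * hdet
    · linear_combination x.1.2 * hdet
    · linear_combination x.2.1.1 * hdet
    · linear_combination x.2.1.2 * hdet
    · rfl
  map_app' x := by
    simp only [addHyperbolic_apply]
    linear_combination (x.1.1 * x.1.2 + x.2.1.1 * x.2.1.2) * hdet

@[simp]
lemma specialLinearIsometry_apply (Q : QuadraticForm R K) (p q r s : R) (hdet : p * s - q * r = 1)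
    (x : (R × R) × (R × R) × K) :
    specialLinearIsometry Q p q r s hdet x =
      ((s * x.1.1 - r * x.2.1.1, p * x.1.2 + q * x.2.1.2),
        (p * x.2.1.1 - q * x.1.1, r * x.1.2 + s * x.2.1.2), x.2.2) := rfl

variable (R) in
/-- The isometry from `Dual R² × R²`, with the evaluation pairing as its quadratic form, to `U ⊕ U`;
it pairs each coordinate of `R²` with its dual coordinate. -/
def dualProdToHyperbolicPlanes :
    QuadraticForm.dualProd R (Fin 2 → R) →qᵢ addHyperbolic (hyperbolicPlane R) where
  toFun y := ((y.1 (Pi.single 0 1), y.2 0), (y.1 (Pi.single 1 1), y.2 1))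
  map_add' _ _ := rfl
  map_smul' _ _ := rfl
  map_app' y := by
    have hy : y.1 y.2 = y.2 0 * y.1 (Pi.single 0 1) + y.2 1 * y.1 (Pi.single 1 1) := by
      simpa [Fin.sum_univ_two] using
        congrArg y.1 ((Pi.basisFun R (Fin 2)).sum_repr y.2).symm
    simp [hy, mul_comm]

end HyperbolicPlane

section Polar

variable {R M N : Type*} [CommRing R] [AddCommGroup M] [Module R M] [AddCommGroup N] [Module R N]

lemma polar_isometryEquiv {Q : QuadraticForm R M} {Q' : QuadraticForm R N}
    (g : Q.IsometryEquiv Q') (x y : M) : polar Q' (g x) (g y) = polar Q x y := by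
  simp only [polar, ← map_add, IsometryEquiv.map_app]

end Polar

section Eichler

variable {R K : Type*} [CommRing R] [AddCommGroup K] [Module R K]

/-- Two vectors of `U ⊕ U ⊕ K` are congruent relative to `S ⊆ K` if an isometry that fixes `S`
pointwise carries the first to the second. -/
def CongruentFixing (Q : QuadraticForm R K) (S : Set K) (u v : (R × R) × (R × R) × K) : Prop :=
  ∃ g : (addHyperbolic (addHyperbolic Q)).IsometryEquiv (addHyperbolic (addHyperbolic Q)),
    (∀ s ∈ S, g (0, 0, s) = (0, 0, s)) ∧ g u = v

variable {Q : QuadraticForm R K} {S : Set K} {u v w : (R × R) × (R × R) × K}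

namespace CongruentFixing

lemma refl (u : (R × R) × (R × R) × K) : CongruentFixing Q S u u :=
  ⟨QuadraticMap.IsometryEquiv.refl _, fun _ _ => rfl, rfl⟩

lemma symm : CongruentFixing Q S u v → CongruentFixing Q S v u := by
  rintro ⟨g, hg, rfl⟩
  exact ⟨g.symm, fun s hs => g.symm_apply_eq.2 (hg s hs).symm, g.symm_apply_apply u⟩

lemma trans : CongruentFixing Q S u v → CongruentFixing Q S v w → CongruentFixing Q S u w := by
  rintro ⟨g, hg, rfl⟩ ⟨h, hh, rfl⟩
  exact ⟨g.trans h, fun s hs => (congrArg h (hg s hs)).trans (hh s hs), rfl⟩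

lemma transvection (u : (R × R) × (R × R) × K) {k : (R × R) × K}
    (hk : ∀ s ∈ S, polar Q k.2 s = 0) :
    CongruentFixing Q S u (eichlerTransvection (addHyperbolic Q) k u) :=
  ⟨_, fun s hs => by simp [hk s hs], rfl⟩

lemma specialLinear (u : (R × R) × (R × R) × K) {p q r s : R} (hdet : p * s - q * r = 1) :
    CongruentFixing Q S u (specialLinearIsometry Q p q r s hdet u) :=
  ⟨_, fun _ _ => by simp, rfl⟩

lemma flip_snd (a b c d : R) (l : K) :
    CongruentFixing Q S ((a, b), (c, d), l) ((a, b), (d, c), l) :=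
  ⟨(QuadraticMap.IsometryEquiv.refl _).prod (hyperbolicFlip Q), fun _ _ => rfl, rfl⟩

/-- The transvections attached to the second plane are conjugate to those attached to the first. -/
lemma transvection_snd (a b : R) (l : K) {k : (R × R) × K} (hk : ∀ s ∈ S, polar Q k.2 s = 0) :
    CongruentFixing Q S ((a, b), (0, 0), l)
      ((a, b), (-polar (addHyperbolic Q) k ((a, b), l), 0), l) := by
  have hswap : CongruentFixing Q S ((a, b), (0, 0), l) ((0, 0), (-a, -b), l) := by
    simpa using specialLinear ((a, b), (0, 0), l) (p := 0) (q := 1) (r := -1) (s := 0) (by ring)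
  have htransvect : CongruentFixing Q S ((0, 0), (-a, -b), l)
      ((-polar (addHyperbolic Q) k ((a, b), l), 0), (-a, -b), l) := by
    simpa using transvection ((0, 0), (-a, -b), l) (k := (-k.1, k.2)) hk
  have hswap_back : CongruentFixing Q S
      ((-polar (addHyperbolic Q) k ((a, b), l), 0), (-a, -b), l)
      ((a, b), (-polar (addHyperbolic Q) k ((a, b), l), 0), l) := by
    simpa using specialLinear ((-polar (addHyperbolic Q) k ((a, b), l), 0), (-a, -b), l)
      (p := 0) (q := -1) (r := 1) (s := 0) (by ring)
  exact hswap.trans (htransvect.trans hswap_back)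

lemma map_eq (h : CongruentFixing Q S u v) :
    addHyperbolic (addHyperbolic Q) u = addHyperbolic (addHyperbolic Q) v := by
  obtain ⟨g, -, rfl⟩ := h
  exact (g.map_app u).symm

lemma polar_eq (h : CongruentFixing Q S u v) {s : K} (hs : s ∈ S) :
    polar Q u.2.2 s = polar Q v.2.2 s := by
  obtain ⟨g, hg, rfl⟩ := h
  simpa [hg s hs] using (polar_isometryEquiv g u (0, 0, s)).symm

lemma exists_orthogonal_polar_eq (h : CongruentFixing Q S u v)
    (hw : ∀ s ∈ S, polar Q w.2.2 s = 0) :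
    ∃ w' : (R × R) × (R × R) × K, (∀ s ∈ S, polar Q w'.2.2 s = 0) ∧
      polar (addHyperbolic (addHyperbolic Q)) w' v =
        polar (addHyperbolic (addHyperbolic Q)) w u := by
  obtain ⟨g, hg, rfl⟩ := h
  have hwg : CongruentFixing Q S w (g w) := ⟨g, hg, rfl⟩
  exact ⟨g w, fun s hs => (hwg.polar_eq hs).symm.trans (hw s hs), polar_isometryEquiv g w u⟩

end CongruentFixing

/-- A vector whose second coordinate in the first plane is minimal for divisibility among those of
the vectors congruent to it, as at the end of a Euclidean reduction. -/
def IsDvdMinimal (Q : QuadraticForm R K) (S : Set K) (u : (R × R) × (R × R) × K) : Prop :=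
  ∀ v, CongruentFixing Q S u v → v.1.2 ∣ u.1.2 → u.1.2 ∣ v.1.2

lemma exists_congruent_isDvdMinimal [WfDvdMonoid R] (Q : QuadraticForm R K) (S : Set K)
    (u : (R × R) × (R × R) × K) : ∃ v, CongruentFixing Q S u v ∧ IsDvdMinimal Q S v := by
  obtain ⟨v, huv, hmin⟩ := (InvImage.wf (fun v : (R × R) × (R × R) × K => v.1.2)
    (wellFounded_dvdNotUnit (α := R))).has_min {v | CongruentFixing Q S u v} ⟨u, .refl u⟩
  refine ⟨v, huv, fun w hvw hdvd => ?_⟩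
  by_contra hndvd
  exact hmin w (huv.trans hvw) (dvdNotUnit_of_dvd_of_not_dvd hdvd hndvd)

namespace IsDvdMinimal

lemma of_congruent (hu : IsDvdMinimal Q S u) (huv : CongruentFixing Q S u v)
    (heq : v.1.2 = u.1.2) : IsDvdMinimal Q S v :=
  fun w hvw => heq ▸ hu w (huv.trans hvw)

variable [IsDomain R] [IsPrincipalIdealRing R]

lemma dvd_snd_snd (hu : IsDvdMinimal Q S u) : u.1.2 ∣ u.2.1.2 := by
  classical
  let := IsBezout.toGCDDomain R
  obtain ⟨b, d, hb, hd, hbd⟩ := extract_gcd u.1.2 u.2.1.2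
  obtain ⟨p, q, hpq⟩ := (gcd_isUnit_iff b d).1 hbd
  have hgcd : p * u.1.2 + q * u.2.1.2 = gcd u.1.2 u.2.1.2 := by
    linear_combination p * hb + q * hd + gcd u.1.2 u.2.1.2 * hpq
  have hdvd := hu _ (.specialLinear u (p := p) (q := q) (r := -d) (s := b)
    (by linear_combination hpq))
  simp only [specialLinearIsometry_apply, hgcd] at hdvd
  exact (hdvd (gcd_dvd_left _ _)).trans (gcd_dvd_right _ _)

lemma dvd_snd_fst (hu : IsDvdMinimal Q S u) : u.1.2 ∣ u.2.1.1 :=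
  (hu.of_congruent (.flip_snd u.1.1 u.1.2 u.2.1.1 u.2.1.2 u.2.2) rfl).dvd_snd_snd

lemma exists_congruent_snd_eq_zero (hu : IsDvdMinimal Q S u) :
    ∃ a, CongruentFixing Q S u ((a, u.1.2), (0, 0), u.2.2) := by
  obtain ⟨c, hc⟩ := hu.dvd_snd_fst
  obtain ⟨d, hd⟩ := hu.dvd_snd_snd
  have h := CongruentFixing.transvection (Q := Q) (S := S) u (k := ((-c, -d), 0)) (by simp)
  have hzero : u.2 + u.1.2 • ((-c, -d), 0) = ((0, 0), u.2.2) := by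
    ext <;> simp [hc, hd]
  rw [eichlerTransvection_apply, hzero] at h
  exact ⟨_, h⟩

lemma dvd_polar (hu : IsDvdMinimal Q S u) (hw : ∀ s ∈ S, polar Q w.2.2 s = 0) :
    u.1.2 ∣ polar (addHyperbolic (addHyperbolic Q)) w u := by
  obtain ⟨a, hua⟩ := hu.exists_congruent_snd_eq_zero
  obtain ⟨w', hw', hpolar⟩ := hua.exists_orthogonal_polar_eq hw
  have hdvd := (hu.of_congruent (hua.trans (.transvection_snd a u.1.2 u.2.2
    (k := (w'.1, w'.2.2)) hw')) rfl).dvd_snd_fst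
  rw [← hpolar, ← dvd_neg]
  simpa [add_assoc, add_comm] using hdvd

end IsDvdMinimal

variable [IsDomain R] [IsPrincipalIdealRing R]

lemma exists_congruent_snd_eq_one (hw : ∀ s ∈ S, polar Q w.2.2 s = 0)
    (hwu : polar (addHyperbolic (addHyperbolic Q)) w u = 1) :
    ∃ a k, CongruentFixing Q S u ((a, 1), k) := by
  obtain ⟨v, huv, hv⟩ := exists_congruent_isDvdMinimal Q S u
  obtain ⟨w', hw', hpolar⟩ := huv.exists_orthogonal_polar_eq hw
  obtain ⟨c, hc⟩ : v.1.2 ∣ 1 := hwu ▸ hpolar ▸ hv.dvd_polar hw'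
  have h := CongruentFixing.specialLinear (Q := Q) (S := S) v (p := c) (q := 0) (r := 0)
    (s := v.1.2) (by linear_combination -hc)
  rw [specialLinearIsometry_apply, mul_comm c, ← hc, zero_mul (v.2.1.2), add_zero] at h
  exact ⟨_, _, huv.trans h⟩

theorem congruentFixing_of_map_eq {w w' : (R × R) × (R × R) × K}
    (huv : addHyperbolic (addHyperbolic Q) u = addHyperbolic (addHyperbolic Q) v)
    (hS : ∀ s ∈ S, polar Q u.2.2 s = polar Q v.2.2 s)
    (hw : ∀ s ∈ S, polar Q w.2.2 s = 0) (hwu : polar (addHyperbolic (addHyperbolic Q)) w u = 1)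
    (hw' : ∀ s ∈ S, polar Q w'.2.2 s = 0)
    (hwv : polar (addHyperbolic (addHyperbolic Q)) w' v = 1) :
    CongruentFixing Q S u v := by
  obtain ⟨a, k, hu⟩ := exists_congruent_snd_eq_one hw hwu
  obtain ⟨b, l, hv⟩ := exists_congruent_snd_eq_one hw' hwv
  have horth : ∀ s ∈ S, polar Q (l - k).2 s = 0 := fun s hs => by
    rw [Prod.snd_sub, polar_sub_left, ← hu.polar_eq hs, ← hv.polar_eq hs, hS s hs, sub_self]
  obtain ⟨c, hkl⟩ : ∃ c, CongruentFixing Q S ((a, 1), k) ((c, 1), l) := by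
    have h := CongruentFixing.transvection ((a, 1), k) horth
    rw [eichlerTransvection_apply, one_smul, add_sub_cancel] at h
    exact ⟨_, h⟩
  have hcb : c = b := by
    simpa using (hu.trans hkl).map_eq.symm.trans (huv.trans hv.map_eq)
  exact hu.trans (hkl.trans (hcb ▸ hv.symm))

end Eichler

section Embedding

variable {R L M K : Type*} [CommRing R] [AddCommGroup L] [Module R L] [AddCommGroup M] [Module R M]
  [AddCommGroup K] [Module R K]

/-- Every linear form on `L` is `x ↦ B(w, j x)` for some vector `w` of `M`, where `B` is the polar
form of `Q`. In a unimodular lattice this expresses that the embedding `j` is primitive. -/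
def PairsOntoDual (Q : QuadraticForm R M) (j : L →ₗ[R] M) : Prop :=
  ∀ φ : Module.Dual R L, ∃ w, ∀ x, polar Q w (j x) = φ x

lemma polar_map_eq_of_map_eq {Q : QuadraticForm R M} {Q' : QuadraticForm R K} {j : L →ₗ[R] M}
    {j' : L →ₗ[R] K} (h : ∀ x, Q (j x) = Q' (j' x)) (x y : L) :
    polar Q (j x) (j y) = polar Q' (j' x) (j' y) := by
  simp only [polar, ← map_add, h]

/-- A bilinear form `B` with `B x x = q x` represents `q` by the graph of `B` in `Dual R L × L`. -/
lemma exists_dualProd_map_eq [Module.Free R L] (q : QuadraticForm R L) :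
    ∃ j : L →ₗ[R] Module.Dual R L × L, PairsOntoDual (QuadraticForm.dualProd R L) j ∧
      ∀ x, QuadraticForm.dualProd R L (j x) = q x := by
  obtain ⟨B, rfl⟩ := LinearMap.BilinMap.toQuadraticMap_surjective q
  refine ⟨B.prod LinearMap.id, fun φ => ⟨(φ, 0), fun x => ?_⟩, fun x => rfl⟩
  simp [polar]

namespace PairsOntoDual

lemma comp_isometry {Q : QuadraticForm R M} {Q' : QuadraticForm R K} {j : L →ₗ[R] M}
    (hj : PairsOntoDual Q j) (h : Q →qᵢ Q') : PairsOntoDual Q' (h.toLinearMap ∘ₗ j) := fun φ => by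
  obtain ⟨w, hw⟩ := hj φ
  refine ⟨h w, fun x => ?_⟩
  rw [← hw x]
  exact polar_map_eq_of_map_eq (j := h.toLinearMap) (j' := LinearMap.id) h.map_app w (j x)

end PairsOntoDual

lemma exists_leftInverse_of_saturated [IsDomain R] [IsPrincipalIdealRing R] [Module.Finite R M]
    {j : L →ₗ[R] M} (hj : Function.Injective j)
    (hsat : ∀ (k : R) (x : M), k ≠ 0 → k • x ∈ LinearMap.range j → x ∈ LinearMap.range j) :
    ∃ r : M →ₗ[R] L, r ∘ₗ j = LinearMap.id := by
  have : Module.IsTorsionFree R (M ⧸ LinearMap.range j) := by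
    refine .of_smul_eq_zero fun k x hkx => ?_
    obtain ⟨x, rfl⟩ := Submodule.mkQ_surjective _ x
    rw [← map_smul] at hkx
    simp only [Submodule.mkQ_apply, Submodule.Quotient.mk_eq_zero] at hkx ⊢
    exact or_iff_not_imp_left.2 fun hk => hsat k x hk hkx
  obtain ⟨t, ht⟩ := (LinearMap.range j).mkQ.exists_rightInverse_of_surjective
    (Submodule.range_mkQ _)
  have hsplit := (j.exact_map_mkQ_range.split_tfae').out 0 1
  exact (hsplit.1 ⟨hj, t, ht⟩).2

lemma pairsOntoDual_of_saturated [IsDomain R] [IsPrincipalIdealRing R] [Module.Finite R M]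
    {Q : QuadraticForm R M} (hQ : Function.Surjective Q.polarBilin) {j : L →ₗ[R] M}
    (hj : Function.Injective j)
    (hsat : ∀ (k : R) (x : M), k ≠ 0 → k • x ∈ LinearMap.range j → x ∈ LinearMap.range j) :
    PairsOntoDual Q j := fun φ => by
  obtain ⟨r, hr⟩ := exists_leftInverse_of_saturated hj hsat
  obtain ⟨w, hw⟩ := hQ (φ ∘ₗ r)
  refine ⟨w, fun x => ?_⟩
  calc polar Q w (j x) = φ (r (j x)) := LinearMap.congr_fun hw (j x)
    _ = φ x := congrArg φ (LinearMap.congr_fun hr x)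

variable [IsDomain R] [IsPrincipalIdealRing R] {Q : QuadraticForm R K}

lemma exists_isometryEquiv_eq_on_finset {ι : Type*} (b : Module.Basis ι R L) {j₀ : L →ₗ[R] K}
    {j : L →ₗ[R] (R × R) × (R × R) × K} (hj₀ : PairsOntoDual Q j₀)
    (hj : PairsOntoDual (addHyperbolic (addHyperbolic Q)) j)
    (hval : ∀ l, addHyperbolic (addHyperbolic Q) (j l) = Q (j₀ l)) (T : Finset ι) :
    ∃ g : (addHyperbolic (addHyperbolic Q)).IsometryEquiv (addHyperbolic (addHyperbolic Q)),
      ∀ i ∈ T, g (j (b i)) = (0, 0, j₀ (b i)) := by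
  classical
  induction T using Finset.induction_on with
  | empty => exact ⟨.refl _, by simp⟩
  | insert a T ha ih =>
    obtain ⟨g, hg⟩ := ih
    obtain ⟨w, hw⟩ := hj (b.coord a)
    obtain ⟨w', hw'⟩ := hj₀ (b.coord a)
    have hcoord : ∀ i ∈ T, b.coord a (b i) = 0 := fun i hi => by
      simp [ne_of_mem_of_not_mem hi ha]
    have hpolar : ∀ y, ∀ i ∈ T, polar Q (g y).2.2 (j₀ (b i)) =
        polar (addHyperbolic (addHyperbolic Q)) y (j (b i)) := fun y i hi => by
      rw [← polar_isometryEquiv g, hg i hi]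
      simp
    obtain ⟨h, hfix, hmap⟩ : CongruentFixing Q ((fun i => j₀ (b i)) '' T) (g (j (b a)))
        (0, 0, j₀ (b a)) := by
      refine congruentFixing_of_map_eq (w := g w) (w' := (0, 0, w')) (by simp [← hval])
        ?_ ?_ ?_ ?_ ?_
      · rintro _ ⟨i, hi, rfl⟩
        exact (hpolar _ i hi).trans (polar_map_eq_of_map_eq hval _ _)
      · rintro _ ⟨i, hi, rfl⟩
        rw [hpolar w i hi, hw, hcoord i hi]
      · rw [polar_isometryEquiv, hw]
        simp
      · rintro _ ⟨i, hi, rfl⟩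
        exact (hw' _).trans (hcoord i hi)
      · simp [hw']
    refine ⟨g.trans h, fun i hi => ?_⟩
    obtain rfl | hi := Finset.mem_insert.1 hi
    · exact hmap
    · exact (congrArg h (hg i hi)).trans (hfix _ ⟨i, hi, rfl⟩)

lemma exists_isometryEquiv_eq_inr [Module.Free R L] [Module.Finite R L] {j₀ : L →ₗ[R] K}
    {j : L →ₗ[R] (R × R) × (R × R) × K} (hj₀ : PairsOntoDual Q j₀)
    (hj : PairsOntoDual (addHyperbolic (addHyperbolic Q)) j)
    (hval : ∀ l, addHyperbolic (addHyperbolic Q) (j l) = Q (j₀ l)) :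
    ∃ g : (addHyperbolic (addHyperbolic Q)).IsometryEquiv (addHyperbolic (addHyperbolic Q)),
      ∀ l, g (j l) = (0, 0, j₀ l) := by
  let b := Module.Free.chooseBasis R L
  obtain ⟨g, hg⟩ := exists_isometryEquiv_eq_on_finset b hj₀ hj hval Finset.univ
  have hext : g.toLinearMap ∘ₗ j = LinearMap.inr R _ _ ∘ₗ LinearMap.inr R _ _ ∘ₗ j₀ :=
    b.ext fun i => hg i (Finset.mem_univ i)
  exact ⟨g, LinearMap.congr_fun hext⟩

end Embedding

theorem stmt9_general {R L M K : Type*} [CommRing R] [IsDomain R] [IsPrincipalIdealRing R]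
    [AddCommGroup L] [Module R L] [Module.Free R L] [Module.Finite R L]
    [AddCommGroup M] [Module R M] [Module.Finite R M] [AddCommGroup K] [Module R K]
    {Q : QuadraticForm R M} {Q' : QuadraticForm R K} (hQ : Function.Surjective Q.polarBilin)
    (e : Q.IsometryEquiv (addHyperbolic (addHyperbolic Q')))
    (h : QuadraticForm.dualProd R L →qᵢ Q') {j₁ j₂ : L →ₗ[R] M}
    (hj₁ : Function.Injective j₁) (hj₂ : Function.Injective j₂)
    (hj₁prim : ∀ (k : R) (x : M), k ≠ 0 → k • x ∈ LinearMap.range j₁ → x ∈ LinearMap.range j₁)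
    (hj₂prim : ∀ (k : R) (x : M), k ≠ 0 → k • x ∈ LinearMap.range j₂ → x ∈ LinearMap.range j₂)
    (hj : ∀ x, Q (j₁ x) = Q (j₂ x)) :
    ∃ g : Q.IsometryEquiv Q, ∀ x, g (j₁ x) = j₂ x := by
  obtain ⟨j₀, hj₀, hval⟩ := exists_dualProd_map_eq (Q.comp j₁)
  have hdual₁ := (pairsOntoDual_of_saturated hQ hj₁ hj₁prim).comp_isometry e.toIsometry
  have hdual₂ := (pairsOntoDual_of_saturated hQ hj₂ hj₂prim).comp_isometry e.toIsometry
  obtain ⟨g₁, hg₁⟩ := exists_isometryEquiv_eq_inr (hj₀.comp_isometry h) hdual₁ fun x => by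
    simp [hval]
  obtain ⟨g₂, hg₂⟩ := exists_isometryEquiv_eq_inr (hj₀.comp_isometry h) hdual₂ fun x => by
    simp [hval, hj]
  refine ⟨(e.trans g₁).trans (e.trans g₂).symm, fun x => ?_⟩
  exact (e.trans g₂).symm_apply_eq.2 ((hg₁ x).trans (hg₂ x).symm)

section Mukai

/-- The coordinates on `ℤ⁸` grouped into the four hyperbolic planes of the Mukai lattice. -/
def mukaiCoordinates : (Fin 8 → ℤ) ≃ₗ[ℤ] (ℤ × ℤ) × (ℤ × ℤ) × (ℤ × ℤ) × ℤ × ℤ where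
  toFun x := ((x 0, x 1), (x 2, x 3), (x 4, x 5), x 6, x 7)
  invFun y := ![y.1.1, y.1.2, y.2.1.1, y.2.1.2, y.2.2.1.1, y.2.2.1.2, y.2.2.2.1, y.2.2.2.2]
  map_add' _ _ := rfl
  map_smul' _ _ := rfl
  left_inv x := by
    ext i
    fin_cases i <;> rfl
  right_inv _ := rfl

/-- The quadratic form of the Mukai lattice; `mukaiForm` is its polar form. -/
def mukaiQuadraticForm : QuadraticForm ℤ (Fin 8 → ℤ) :=
  (addHyperbolic (addHyperbolic (addHyperbolic (hyperbolicPlane ℤ)))).comp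
    mukaiCoordinates.toLinearMap

/-- The decomposition of the Mukai lattice as `U ⊕ (U ⊕ (U ⊕ U))`. -/
def mukaiIsometryEquiv : mukaiQuadraticForm.IsometryEquiv
    (addHyperbolic (addHyperbolic (addHyperbolic (hyperbolicPlane ℤ)))) :=
  (isometryEquivOfCompLinearEquiv _ mukaiCoordinates).symm

lemma polar_mukaiQuadraticForm (x y : Fin 8 → ℤ) :
    polar mukaiQuadraticForm x y = mukaiForm x y := by
  simp only [polar, mukaiQuadraticForm, mukaiCoordinates, mukaiForm, comp_apply, LinearMap.coe_mk,
    AddHom.coe_mk, Pi.add_apply, addHyperbolic_apply, hyperbolicPlane_apply]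
  ring

lemma two_mul_mukaiQuadraticForm (x : Fin 8 → ℤ) :
    2 * mukaiQuadraticForm x = mukaiForm x x := by
  rw [← polar_mukaiQuadraticForm, polar_self, two_smul, two_mul]

lemma mukaiQuadraticForm_polarBilin_surjective :
    Function.Surjective mukaiQuadraticForm.polarBilin := fun φ => by
  let c (i : Fin 8) : ℤ := φ (Pi.single i 1)
  refine ⟨![c 1, c 0, c 3, c 2, c 5, c 4, c 7, c 6], LinearMap.pi_ext' fun i => ?_⟩
  ext
  fin_cases i <;> simp [polar_mukaiQuadraticForm, mukaiForm, c]

end Mukai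

/-- Any two primitive isometric embeddings of the degenerate lattice `L_{n,d}`
(`ℤ²` with Gram matrix `c·[[1,0],[0,0]]`, `c = (2n+2)/d²`) into the Mukai
lattice differ by an isometry of the Mukai lattice. -/
theorem stmt9 (n : ℕ) (hn : 1 ≤ n) (d : ℤ) (hd : 0 < d)
    (hdiv : d ^ 2 ∣ (n : ℤ) + 1) (c : ℤ) (hc : c * d ^ 2 = 2 * ((n : ℤ) + 1))
    (j₁ j₂ : (Fin 2 → ℤ) →ₗ[ℤ] (Fin 8 → ℤ))
    (hj₁ : Function.Injective j₁)
    (hj₁iso : ∀ x y, mukaiForm (j₁ x) (j₁ y) = c * (x 0 * y 0))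
    (hj₁prim : ∀ (k : ℤ) (x : Fin 8 → ℤ), k ≠ 0 → k • x ∈ LinearMap.range j₁ →
      x ∈ LinearMap.range j₁)
    (hj₂ : Function.Injective j₂)
    (hj₂iso : ∀ x y, mukaiForm (j₂ x) (j₂ y) = c * (x 0 * y 0))
    (hj₂prim : ∀ (k : ℤ) (x : Fin 8 → ℤ), k ≠ 0 → k • x ∈ LinearMap.range j₂ →
      x ∈ LinearMap.range j₂) :
    ∃ g : (Fin 8 → ℤ) ≃ₗ[ℤ] (Fin 8 → ℤ),
      (∀ x y, mukaiForm (g x) (g y) = mukaiForm x y) ∧ ∀ x, g (j₁ x) = j₂ x := by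
  have hj : ∀ x, mukaiQuadraticForm (j₁ x) = mukaiQuadraticForm (j₂ x) := fun x =>
    mul_left_cancel₀ two_ne_zero (by simp only [two_mul_mukaiQuadraticForm, hj₁iso, hj₂iso])
  obtain ⟨g, hg⟩ := stmt9_general mukaiQuadraticForm_polarBilin_surjective mukaiIsometryEquiv
    (dualProdToHyperbolicPlanes ℤ) hj₁ hj₂ hj₁prim hj₂prim hj
  refine ⟨g.toLinearEquiv, fun x y => ?_, hg⟩
  simpa only [polar_mukaiQuadraticForm, IsometryEquiv.coe_toLinearEquiv]
    using polar_isometryEquiv g x y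
end

section
/- Let b₂ ≥ 3 and let B be a symmetric bilinear form on ℝ^{b₂} of signature (3, b₂−3), i.e. there is a linear isomorphism of ℝ^{b₂} carrying B to the diagonal form with three entries +1 and b₂−3 entries −1. Let W ⊆ ℝ^{b₂} be a 3-dimensional linear subspace on which B is positive definite, and let C̃ = {x ∈ ℝ^{b₂} : B(x,x) > 0}. Then the inclusion W \ {0} ↪ C̃ is a homotopy equivalence (W \ {0} is a deformation retract of C̃). -/
/-!
A positive definite subspace `W` of the maximal dimension has a negative semidefinite orthogonal
complement `N`: a positive vector orthogonal to `W` would enlarge `W`. Let `P` be the projection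
onto `W` along `N`. On the segment from `P x` to `x` the form is a quadratic polynomial with leading
coefficient `Q (x - P x) ≤ 0`, hence concave, so it stays positive as soon as it is positive at
both ends. The affine homotopy from `P` to the identity therefore never leaves the positive cone.
-/

open QuadraticMap Submodule
open LinearMap (BilinForm)

theorem quadraticForm_apply_smul_add_smul {R M : Type*} [CommRing R] [AddCommGroup M] [Module R M]
    (Q : QuadraticForm R M) (x y : M) {a b : R} (hab : a + b = 1) :
    Q (a • x + b • y) = a * Q x + b * Q y - a * b * Q (x - y) := by
  obtain rfl : b = 1 - a := eq_sub_of_add_eq' hab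
  simp only [sub_eq_add_neg x y, QuadraticMap.map_add Q, QuadraticMap.map_smul,
    QuadraticMap.map_neg, polar_smul_left, polar_smul_right, polar_neg_right, smul_eq_mul]
  ring

theorem segment_subset_setOf_quadraticForm_pos {R M : Type*} [CommRing R] [LinearOrder R]
    [IsStrictOrderedRing R] [AddCommGroup M] [Module R M] (Q : QuadraticForm R M) {x y : M}
    (hx : 0 < Q x) (hy : 0 < Q y) (hxy : Q (x - y) ≤ 0) : segment R x y ⊆ {z | 0 < Q z} := by
  rintro _ ⟨a, b, ha, hb, hab, rfl⟩
  have hconvex : 0 < a * Q x + b * Q y := convex_Ioi (0 : R) hx hy ha hb hab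
  calc 0 < a * Q x + b * Q y := hconvex
    _ ≤ a * Q x + b * Q y - a * b * Q (x - y) :=
      (le_sub_self_iff _).mpr (mul_nonpos_of_nonneg_of_nonpos (mul_nonneg ha hb) hxy)
    _ = Q (a • x + b • y) := (quadraticForm_apply_smul_add_smul Q x y hab).symm

section Homotopy

variable {E : Type*} [AddCommGroup E] [Module ℝ E] [TopologicalSpace E] [IsTopologicalAddGroup E]
  [ContinuousSMul ℝ E]

/-- The affine homotopy between two maps into a subset `S` of a topological vector space, available
when `S` contains the segments joining their values. -/
def segmentHomotopy {X : Type*} [TopologicalSpace X] {S : Set E} (f g : C(X, S))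
    (hfg : ∀ x, segment ℝ (f x : E) (g x) ⊆ S) : f.Homotopy g where
  toFun p := ⟨AffineMap.lineMap (f p.2 : E) (g p.2 : E) (p.1 : ℝ),
    hfg p.2 (segment_eq_image_lineMap ℝ (f p.2 : E) (g p.2) ▸ Set.mem_image_of_mem _ p.1.2)⟩
  continuous_toFun := by fun_prop
  map_zero_left x := by simp
  map_one_left x := by simp

theorem exists_homotopyEquiv_of_segment_subset {A S : Set E} (hAS : A ⊆ S) {r : E → E}
    (hr : ContinuousOn r S) (hrA : Set.MapsTo r S A) (hrid : Set.EqOn r id A)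
    (hseg : ∀ x ∈ S, segment ℝ (r x) x ⊆ S) :
    ∃ H : ContinuousMap.HomotopyEquiv A S, ∀ x, (H.toFun x : E) = x := by
  let incl : C(A, S) := ⟨Set.inclusion hAS, continuous_inclusion hAS⟩
  let retr : C(S, A) := ⟨hrA.restrict r S A, hr.mapsToRestrict hrA⟩
  have hleft : retr.comp incl = .id A := by
    ext x
    exact hrid x.2
  have hright : (incl.comp retr).Homotopic (.id S) :=
    ⟨segmentHomotopy _ _ fun x => hseg x x.2⟩
  exact ⟨⟨incl, retr, hleft ▸ .refl _, hright⟩, fun _ => rfl⟩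

theorem exists_homotopyEquiv_setOf_pos_of_isTopCompl (Q : QuadraticForm ℝ E) {W N : Submodule ℝ E}
    (hWN : IsTopCompl W N) (hW : (Q.restrict W).PosDef) (hN : ∀ x ∈ N, Q x ≤ 0) :
    ∃ H : ContinuousMap.HomotopyEquiv ((W : Set E) \ {0} : Set E) {x : E | 0 < Q x},
      ∀ x, (H.toFun x : E) = x := by
  have hWpos : (W : Set E) \ {0} ⊆ {x | 0 < Q x} := fun x hx =>
    hW ⟨x, hx.1⟩ (Subtype.coe_ne_coe.mp hx.2)
  let P := W.projectionL N hWN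
  have hPmem : Set.MapsTo P {x | 0 < Q x} ((W : Set E) \ {0}) := fun x hx =>
    ⟨projectionL_apply_mem hWN x, fun h0 =>
      (hN x ((projectionL_apply_eq_zero_iff hWN).mp h0)).not_gt hx⟩
  have hPid : Set.EqOn P id ((W : Set E) \ {0}) := fun x hx =>
    (projectionL_eq_self_iff hWN x).mpr hx.1
  have hsub (x : E) : Q (P x - x) ≤ 0 := by
    rw [← neg_sub, QuadraticMap.map_neg, ← projectionL_eq_self_sub_projectionL hWN]
    exact hN _ (projectionL_apply_mem hWN.symm x)
  exact exists_homotopyEquiv_of_segment_subset hWpos P.continuous.continuousOn hPmem hPid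
    fun x hx => segment_subset_setOf_quadraticForm_pos Q (hWpos (hPmem hx)) hx (hsub x)

end Homotopy

section Orthogonal

variable {M : Type*} [AddCommGroup M]

theorem disjoint_orthogonal_polarBilin {R : Type*} [CommRing R] [IsAddTorsionFree R] [Module R M]
    {Q : QuadraticForm R M} {W : Submodule R M} (hW : (Q.restrict W).Anisotropic) :
    Disjoint W (BilinForm.orthogonal Q.polarBilin W) := by
  refine disjoint_def.mpr fun x hx hxo => ?_
  have hpolar : 2 • Q x = 0 := (polar_self Q x).symm.trans (hxo x hx)
  have hQx : Q x = 0 := (smul_eq_zero_iff_right two_ne_zero).mp hpolar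
  exact congrArg Subtype.val (hW ⟨x, hx⟩ hQx)

theorem isCompl_orthogonal_polarBilin {K : Type*} [Field K] [CharZero K] [Module K M]
    [FiniteDimensional K M] {Q : QuadraticForm K M} {W : Submodule K M}
    (hW : (Q.restrict W).Anisotropic) :
    IsCompl W (BilinForm.orthogonal Q.polarBilin W) :=
  (BilinForm.isCompl_orthogonal_iff_disjoint fun x y h => (polar_comm Q y x).trans h).mpr
    (disjoint_orthogonal_polarBilin hW)

theorem posDef_restrict_span_singleton {R : Type*} [CommRing R] [LinearOrder R]
    [IsStrictOrderedRing R] [Module R M] {Q : QuadraticForm R M} {x : M} (hx : 0 < Q x) :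
    (Q.restrict (R ∙ x)).PosDef := by
  rintro ⟨v, hv⟩ hne
  obtain ⟨c, rfl⟩ := mem_span_singleton.mp hv
  have hc : c ≠ 0 := by
    rintro rfl
    simp at hne
  rw [restrict_apply, QuadraticMap.map_smul]
  exact mul_pos (mul_self_pos.mpr hc) hx

theorem posDef_restrict_sup {R : Type*} [CommRing R] [LinearOrder R] [IsStrictOrderedRing R]
    [Module R M] {Q : QuadraticForm R M} {U V : Submodule R M} (hU : (Q.restrict U).PosDef)
    (hV : (Q.restrict V).PosDef) (hUV : ∀ u ∈ U, ∀ v ∈ V, Q.IsOrtho u v) :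
    (Q.restrict (U ⊔ V)).PosDef := by
  rintro ⟨x, hx⟩ hne
  obtain ⟨u, hu, v, hv, rfl⟩ := mem_sup.mp hx
  have hQ : Q (u + v) = Q u + Q v := isOrtho_def.mp (hUV u hu v hv)
  have hu0 : 0 ≤ Q u := hU.nonneg ⟨u, hu⟩
  have hv0 : 0 ≤ Q v := hV.nonneg ⟨v, hv⟩
  rw [restrict_apply, hQ]
  obtain rfl | hune := eq_or_ne u 0
  · have hvne : v ≠ 0 := fun h => hne (by simp [h])
    exact add_pos_of_nonneg_of_pos hu0 (hV ⟨v, hv⟩ (Subtype.coe_ne_coe.mp hvne))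
  · exact add_pos_of_pos_of_nonneg (hU ⟨u, hu⟩ (Subtype.coe_ne_coe.mp hune)) hv0

theorem nonpos_of_mem_orthogonal_of_finrank_eq_sigPos {K : Type*} [Field K] [LinearOrder K]
    [IsStrictOrderedRing K] [Module K M] [FiniteDimensional K M] {Q : QuadraticForm K M}
    {W : Submodule K M} (hrank : Module.finrank K W = sigPos Q) (hW : (Q.restrict W).PosDef) {x : M}
    (hx : x ∈ BilinForm.orthogonal Q.polarBilin W) : Q x ≤ 0 := by
  by_contra! hpos
  have hxW : x ∉ W := fun hxW => by
    have hx0 : x = 0 := disjoint_def.mp (disjoint_orthogonal_polarBilin hW.anisotropic) x hxW hx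
    simp [hx0] at hpos
  have hlt : W < W ⊔ K ∙ x := left_lt_sup.mpr (by simpa only [span_singleton_le_iff_mem] using hxW)
  have hortho : ∀ w ∈ W, ∀ v ∈ K ∙ x, Q.IsOrtho w v := fun w hw v hv =>
    isOrtho_polarBilin.mp <|
      (span_singleton_le_iff_mem x (BilinForm.orthogonal Q.polarBilin W)).mpr hx hv w hw
  have hle : Module.finrank K ↥(W ⊔ K ∙ x) ≤ Module.finrank K W := hrank ▸
    le_sigPos_of_posDef Q
      (posDef_restrict_sup hW (posDef_restrict_span_singleton hpos) hortho)
  exact hle.not_gt (finrank_lt_finrank_of_lt hlt)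

end Orthogonal

/-- The standard quadratic form of signature `(p, n - p)` on `ℝⁿ`, with the positive squares first;
it is positive definite when `n ≤ p`. -/
noncomputable def standardForm (p n : ℕ) : QuadraticForm ℝ (Fin n → ℝ) :=
  weightedSumSquares ℝ fun i : Fin n => if (i : ℕ) < p then (1 : ℝ) else -1

theorem standardForm_apply (p n : ℕ) (x : Fin n → ℝ) :
    standardForm p n x = ∑ i : Fin n, (if (i : ℕ) < p then (1 : ℝ) else -1) * (x i * x i) :=
  weightedSumSquares_apply _ _

theorem sigPos_standardForm {p n : ℕ} (hpn : p ≤ n) : sigPos (standardForm p n) = p := by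
  have hpos : {i : Fin n | (0 : ℝ) < if (i : ℕ) < p then 1 else -1} =
      {i : Fin n | (i : ℕ) < p} := by
    ext i
    by_cases hi : (i : ℕ) < p <;> simp [hi]
  rw [standardForm, QuadraticForm.sigPos_weightedSumSquares, hpos]
  simp [Set.ncard_eq_toFinset_card', Fin.card_filter_val_lt, hpn]

theorem sigPos_comp_linearEquiv {R M M' : Type*} [CommRing R] [LinearOrder R] [AddCommGroup M]
    [Module R M] [AddCommGroup M'] [Module R M'] (Q : QuadraticForm R M') (φ : M ≃ₗ[R] M') :
    sigPos (Q.comp (φ : M →ₗ[R] M')) = sigPos Q :=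
  Equivalent.sigPos_eq ⟨⟨φ, fun _ => rfl⟩⟩

theorem stmt14_general {E : Type*} [AddCommGroup E] [Module ℝ E] [TopologicalSpace E]
    [IsTopologicalAddGroup E] [ContinuousSMul ℝ E] [T2Space E] [FiniteDimensional ℝ E]
    (Q : QuadraticForm ℝ E) (W : Submodule ℝ E) (hrank : Module.finrank ℝ W = sigPos Q)
    (hW : (Q.restrict W).PosDef) :
    ∃ H : ContinuousMap.HomotopyEquiv ((W : Set E) \ {0} : Set E) {x : E | 0 < Q x},
      ∀ x, (H.toFun x : E) = x :=
  exists_homotopyEquiv_setOf_pos_of_isTopCompl Q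
    ((isCompl_orthogonal_polarBilin hW.anisotropic).isTopCompl_of_isClosed_of_finiteDimensional
      W.closed_of_finiteDimensional)
    hW fun _ => nonpos_of_mem_orthogonal_of_finrank_eq_sigPos hrank hW

/-- Let `B` be a symmetric bilinear form on `ℝ^{b₂}` of signature `(3, b₂-3)`
(exhibited by a linear automorphism `φ` diagonalizing `B` with three `+1`'s and
`b₂-3` many `-1`'s), let `W` be a 3-dimensional subspace on which `B` is
positive definite and let `C̃ = {x : B(x,x) > 0}`. Then the inclusion
`W \ {0} ↪ C̃` is a homotopy equivalence. -/
theorem stmt14 (b₂ : ℕ) (hb : 3 ≤ b₂)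
    (B : (Fin b₂ → ℝ) → (Fin b₂ → ℝ) → ℝ)
    (φ : (Fin b₂ → ℝ) ≃ₗ[ℝ] (Fin b₂ → ℝ))
    (hB : ∀ x y, B x y =
      ∑ i : Fin b₂, (if (i : ℕ) < 3 then (1 : ℝ) else -1) * (φ x i * φ y i))
    (W : Submodule ℝ (Fin b₂ → ℝ)) (hW : Module.finrank ℝ W = 3)
    (hpos : ∀ x ∈ W, x ≠ 0 → 0 < B x x) :
    ∃ H : ContinuousMap.HomotopyEquiv
        (((W : Set (Fin b₂ → ℝ)) \ {0} : Set (Fin b₂ → ℝ)))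
        ({x : Fin b₂ → ℝ | 0 < B x x}),
      ∀ x, (H.toFun x).1 = x.1 := by
  have hcone : {x | 0 < B x x} = {x | 0 < (standardForm 3 b₂).comp φ.toLinearMap x} := by
    simp [hB, standardForm_apply]
  rw [hcone]
  exact stmt14_general _ W (by rw [hW, sigPos_comp_linearEquiv, sigPos_standardForm hb])
    fun w hw => hcone.subset (hpos w w.2 (Subtype.coe_ne_coe.mpr hw))
end
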